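/- arXiv:1403.3967 — 5 statements merged into one kernel-verified Lean document; each statement's English description precedes it below -/
import Mathlib

section
/- Let n ≥ 2, let G be a connected simple graph on vertex set Fin n with Laplacian matrix L(G), degree matrix Δ(G), and adjacency matrix A(G), and let α > 0. Suppose x̂, x̃, w̃ : ℝ → (Fin n → ℝ) are differentiable functions satisfying, for all t ≥ 0, the linear ODE system x̂'(t) = −L(G)·x̂(t) + A(G)·x̃(t), x̃'(t) = −Δ(G)·x̃(t) − w̃(t), and w̃'(t) = α·x̃(t). Then the solution is exponentially stable in the disagreement and error variables: there exist constants C ≥ 0 and β > 0 (with C depending on the initial conditions) such that for all t ≥ 0, ‖x̃(t)‖ + ‖w̃(t)‖ + max_{i,j} |x̂_i(t) − x̂_j(t)| ≤ C·e^{−β t}. -/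
/-!
The error pair `(x̃, w̃)` decouples over the vertices. With `d` the degree of a vertex, the form
`α x² + w² + 2 ε x w` is, for small `ε > 0`, positive definite and a strict Lyapunov function of
`x' = -d x - w`, `w' = α x`, uniformly for `1 ≤ d ≤ n`; connectedness and `2 ≤ n` give `1 ≤ d`
(`lyapunov_lower`, `lyapunov_decay`).

The disagreement is measured by `P = ∑ i j, (x̂ i - x̂ j)²`. Since the Laplacian is symmetric and
kills constants, `P' = -4 n (x̂ᵀ L x̂) + 2 ∑ i j, (x̂ i - x̂ j) (g i - g j)` with the forcing term
`g = A x̃`, and a Poincaré inequality on the connected graph (`poincare`) bounds `x̂ᵀ L x̂` below by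
a multiple of `P`. Young's inequality turns this into `P' ≤ -a P + D e^{-bt}`, so `P` decays
exponentially by a Grönwall argument (`exp_decay`).
-/

open Matrix

/-- Euclidean norm on `Fin n → ℝ`. -/
noncomputable def euclNorm {n : ℕ} (v : Fin n → ℝ) : ℝ :=
  Real.sqrt (∑ i, (v i) ^ 2)

/-- Grönwall with an exponentially decaying forcing term; the rate `min a (b / 2)` stays below `b`,
which avoids the resonant case `a = b`. -/
lemma exp_decay (f f' : ℝ → ℝ) (a b D : ℝ) (ha : 0 < a) (hb : 0 < b) (hD : 0 ≤ D)
    (hf : ∀ t ≥ (0 : ℝ), HasDerivAt f (f' t) t) (hf0 : ∀ t, 0 ≤ f t)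
    (h : ∀ t ≥ (0 : ℝ), f' t ≤ -a * f t + D * Real.exp (-b * t)) :
    ∃ C ≥ (0 : ℝ), ∃ c > (0 : ℝ), ∀ t ≥ (0 : ℝ), f t ≤ C * Real.exp (-c * t) := by
  obtain ⟨c, hc, hca, hcb⟩ : ∃ c : ℝ, 0 < c ∧ c ≤ a ∧ c < b :=
    ⟨min a (b / 2), by positivity, min_le_left _ _, (min_le_right _ _).trans_lt (by linarith)⟩
  have hbc : 0 < b - c := by linarith
  refine ⟨f 0 + D / (b - c), by have := hf0 0; positivity, c, hc, ?_⟩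
  -- `H` is a nonincreasing majorant of `f e^{ct}`.
  let H : ℝ → ℝ := fun t => f t * Real.exp (c * t) + D / (b - c) * Real.exp (-(b - c) * t)
  have hH : ∀ t ≥ (0 : ℝ), HasDerivAt H
      (f' t * Real.exp (c * t) + f t * (Real.exp (c * t) * c)
        + D / (b - c) * (Real.exp (-(b - c) * t) * (-(b - c)))) t := by
    intro t ht
    have e1 : HasDerivAt (fun t : ℝ => Real.exp (c * t)) (Real.exp (c * t) * c) t := by
      simpa using ((hasDerivAt_id t).const_mul c).exp
    have e2 : HasDerivAt (fun t : ℝ => Real.exp (-(b - c) * t))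
        (Real.exp (-(b - c) * t) * (-(b - c))) t := by
      simpa using ((hasDerivAt_id t).const_mul (-(b - c))).exp
    exact ((hf t ht).mul e1).add (e2.const_mul _)
  have hanti : AntitoneOn H (Set.Ici 0) := by
    refine antitoneOn_of_hasDerivWithinAt_nonpos (convex_Ici 0)
      (fun t ht => (hH t ht).continuousAt.continuousWithinAt)
      (fun t ht => (hH t (interior_subset ht)).hasDerivWithinAt) ?_
    intro t ht
    have ht0 : t ≥ 0 := interior_subset ht
    have e3 : Real.exp (-(b - c) * t) = Real.exp (-b * t) * Real.exp (c * t) := by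
      rw [← Real.exp_add]; ring_nf
    have e4 : D / (b - c) * (Real.exp (-(b - c) * t) * (-(b - c)))
        = -(D * Real.exp (-b * t)) * Real.exp (c * t) := by
      rw [e3]; field_simp
    rw [e4]
    have h1 : f' t + f t * c - D * Real.exp (-b * t) ≤ 0 := by
      nlinarith [h t ht0, mul_le_mul_of_nonneg_right hca (hf0 t)]
    nlinarith [mul_nonneg (sub_nonneg.2 h1) (Real.exp_pos (c * t)).le]
  intro t ht
  have h2 := hanti (Set.mem_Ici.2 le_rfl) (Set.mem_Ici.2 ht) ht
  simp only [H, mul_zero, Real.exp_zero, mul_one] at h2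
  have h3 : f t * Real.exp (c * t) ≤ f 0 + D / (b - c) := by
    have : 0 ≤ D / (b - c) * Real.exp (-(b - c) * t) := by positivity
    linarith
  have h4 : Real.exp (-c * t) * Real.exp (c * t) = 1 := by
    rw [← Real.exp_add]; simp
  calc f t = f t * Real.exp (c * t) * Real.exp (-c * t) := by linear_combination -f t * h4
    _ ≤ _ := mul_le_mul_of_nonneg_right h3 (Real.exp_pos _).le

lemma lyapunov_lower {α ε : ℝ} (hε : 4 * ε ^ 2 ≤ α) (x w : ℝ) :
    α / 2 * x ^ 2 + 1 / 2 * w ^ 2 ≤ α * x ^ 2 + w ^ 2 + 2 * ε * x * w := by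
  nlinarith [sq_nonneg (2 * ε * x + w), mul_nonneg (sub_nonneg.2 hε) (sq_nonneg x)]

lemma lyapunov_decay {α ε d N : ℝ} (hα : 0 < α) (hε : 0 < ε) (hε1 : ε ≤ 1) (hεα : ε ≤ α)
    (hd : 1 ≤ d) (hdN : d ≤ N) (hN : ε * (N ^ 2 + 2 * α) ≤ α) (x w : ℝ) :
    2 * α * x * (-d * x - w) + 2 * w * (α * x) + 2 * ε * ((-d * x - w) * w + x * (α * x))
      ≤ -(ε / 2) * (α * x ^ 2 + w ^ 2 + 2 * ε * x * w) := by
  have h1 : 2 * α * x * (-d * x - w) + 2 * w * (α * x)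
      + 2 * ε * ((-d * x - w) * w + x * (α * x)) ≤ -α * x ^ 2 - ε * w ^ 2 := by
    have a1 : 0 ≤ ε * (d * x + w) ^ 2 := by positivity
    have a2 : ε * d ^ 2 ≤ ε * N ^ 2 := by gcongr
    have a3 : 0 ≤ (2 * α * d - ε * d ^ 2 - 2 * ε * α - α) * x ^ 2 :=
      mul_nonneg (by nlinarith) (sq_nonneg x)
    nlinarith
  have h2 : α * x ^ 2 + w ^ 2 + 2 * ε * x * w ≤ 2 * α * x ^ 2 + 2 * w ^ 2 := by
    have b1 : 0 ≤ ε * (x - w) ^ 2 := by positivity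
    nlinarith [mul_nonneg (sub_nonneg.2 hεα) (sq_nonneg x),
      mul_nonneg (sub_nonneg.2 hε1) (sq_nonneg w)]
  have h3 : 0 ≤ (1 - ε) * (α * x ^ 2) := mul_nonneg (by linarith) (by positivity)
  nlinarith [mul_le_mul_of_nonneg_left h2 hε.le]

section Graph

variable {n : ℕ} (G : SimpleGraph (Fin n)) [DecidableRel G.Adj]

lemma lap_form (x : Fin n → ℝ) :
    ∑ i, x i * (G.lapMatrix ℝ).mulVec x i
      = (∑ i, ∑ j, if G.Adj i j then (x i - x j) ^ 2 else 0) / 2 := by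
  rw [← SimpleGraph.lapMatrix_toLinearMap₂', Matrix.toLinearMap₂'_apply']
  rfl

lemma adj_le (x : Fin n → ℝ) {i j : Fin n} (h : G.Adj i j) :
    (x i - x j) ^ 2 ≤ 2 * ∑ i, x i * (G.lapMatrix ℝ).mulVec x i := by
  have hnn : ∀ i j, 0 ≤ (if G.Adj i j then (x i - x j) ^ 2 else 0) := by
    intro i j; split_ifs <;> positivity
  rw [lap_form]
  calc (x i - x j) ^ 2 = (if G.Adj i j then (x i - x j) ^ 2 else 0) := by simp [h]
    _ ≤ ∑ j, (if G.Adj i j then (x i - x j) ^ 2 else 0) :=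
      Finset.single_le_sum (f := fun j => if G.Adj i j then (x i - x j) ^ 2 else 0)
        (fun j _ => hnn i j) (Finset.mem_univ j)
    _ ≤ ∑ i, ∑ j, (if G.Adj i j then (x i - x j) ^ 2 else 0) :=
      Finset.single_le_sum (f := fun i => ∑ j, if G.Adj i j then (x i - x j) ^ 2 else 0)
        (fun i _ => Finset.sum_nonneg fun j _ => hnn i j) (Finset.mem_univ i)
    _ = _ := by ring

lemma lap_form_nonneg (x : Fin n → ℝ) : 0 ≤ ∑ i, x i * (G.lapMatrix ℝ).mulVec x i := by
  rw [lap_form]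
  refine div_nonneg (Finset.sum_nonneg fun i _ => Finset.sum_nonneg fun j _ => ?_) (by norm_num)
  split_ifs <;> positivity

/-- Along a walk, the squared difference of the end values is controlled edge by edge. -/
lemma walk_bound {i j : Fin n} (p : G.Walk i j) :
    ∃ K ≥ (0 : ℝ), ∀ x : Fin n → ℝ,
      (x i - x j) ^ 2 ≤ K * ∑ i, x i * (G.lapMatrix ℝ).mulVec x i := by
  induction p with
  | nil => exact ⟨0, le_rfl, fun x => by simp⟩
  | @cons u v w h p ih =>
    obtain ⟨K, hK, hx⟩ := ih
    refine ⟨4 + 2 * K, by positivity, fun x => ?_⟩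
    nlinarith [hx x, adj_le G x h, sq_nonneg ((x u - x v) - (x v - x w))]

/-- Poincaré inequality (positive algebraic connectivity) on a connected graph. -/
lemma poincare (hG : G.Connected) :
    ∃ K > (0 : ℝ), ∀ x : Fin n → ℝ,
      ∑ i, ∑ j, (x i - x j) ^ 2 ≤ K * ∑ i, x i * (G.lapMatrix ℝ).mulVec x i := by
  have h : ∀ i j, ∃ K ≥ (0 : ℝ), ∀ x : Fin n → ℝ,
      (x i - x j) ^ 2 ≤ K * ∑ i, x i * (G.lapMatrix ℝ).mulVec x i := fun i j => by
    obtain ⟨p⟩ := hG.preconnected i j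
    exact walk_bound G p
  choose K hK hx using h
  refine ⟨∑ i, ∑ j, K i j + 1, ?_, fun x => ?_⟩
  · have : 0 ≤ ∑ i, ∑ j, K i j := Finset.sum_nonneg fun i _ => Finset.sum_nonneg fun j _ => hK i j
    linarith
  · have h1 : ∑ i, ∑ j, (x i - x j) ^ 2
        ≤ (∑ i, ∑ j, K i j) * ∑ i, x i * (G.lapMatrix ℝ).mulVec x i := by
      rw [Finset.sum_mul]
      refine Finset.sum_le_sum fun i _ => ?_
      rw [Finset.sum_mul]
      exact Finset.sum_le_sum fun j _ => hx i j x
    nlinarith [lap_form_nonneg G x]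

lemma sum_lap (x : Fin n → ℝ) : ∑ i, (G.lapMatrix ℝ).mulVec x i = 0 := by
  have h : (fun _ => (1 : ℝ)) ⬝ᵥ (G.lapMatrix ℝ).mulVec x = 0 := by
    rw [Matrix.dotProduct_mulVec, ← Matrix.mulVec_transpose,
      (G.isSymm_lapMatrix (R := ℝ)).eq, SimpleGraph.lapMatrix_mulVec_const_eq_zero]
    simp
  simpa [dotProduct] using h

end Graph

lemma sum_pair {n : ℕ} (x f : Fin n → ℝ) :
    ∑ i, ∑ j, (x i - x j) * (f i - f j) = 2 * n * ∑ i, x i * f i - 2 * (∑ i, x i) * ∑ i, f i := by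
  have : ∀ i j, (x i - x j) * (f i - f j) = x i * f i + x j * f j - x i * f j - f i * x j := by
    intros; ring
  simp only [this, Finset.sum_add_distrib, Finset.sum_sub_distrib, ← Finset.mul_sum,
    ← Finset.sum_mul, Finset.sum_const, Finset.card_univ, Fintype.card_fin, nsmul_eq_mul,
    mul_comm (n : ℝ), ← mul_assoc]
  ring

lemma sqrt_decay {s C b t β : ℝ} (ht : 0 ≤ t) (hβ : β ≤ b / 2)
    (h : s ≤ C * Real.exp (-b * t)) : √s ≤ √C * Real.exp (-β * t) := by
  have h1 : Real.exp (-b * t) = Real.exp (-(b / 2) * t) ^ 2 := by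
    rw [← Real.exp_nat_mul]; congr 1; push_cast; ring
  calc √s ≤ √(C * Real.exp (-b * t)) := Real.sqrt_le_sqrt h
    _ = √C * Real.exp (-(b / 2) * t) := by
      rw [h1, Real.sqrt_mul' _ (sq_nonneg _), Real.sqrt_sq (Real.exp_pos _).le]
    _ ≤ √C * Real.exp (-β * t) := by
      gcongr

/-- exponential stability of the disagreement and error variables for the
state-emulator based adaptive consensus dynamics on a connected graph. -/
theorem stmt_0 {n : ℕ} (hn : 2 ≤ n) (G : SimpleGraph (Fin n)) [DecidableRel G.Adj]
    (hG : G.Connected) (α : ℝ) (hα : 0 < α)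
    (xhat xtil wtil : ℝ → (Fin n → ℝ))
    (hxhat : ∀ t ≥ (0 : ℝ), HasDerivAt xhat
      (-(G.lapMatrix ℝ).mulVec (xhat t) + (G.adjMatrix ℝ).mulVec (xtil t)) t)
    (hxtil : ∀ t ≥ (0 : ℝ), HasDerivAt xtil
      (-(Matrix.diagonal (fun i => (G.degree i : ℝ))).mulVec (xtil t) - wtil t) t)
    (hwtil : ∀ t ≥ (0 : ℝ), HasDerivAt wtil (α • xtil t) t) :
    ∃ C ≥ (0 : ℝ), ∃ β > (0 : ℝ), ∀ t ≥ (0 : ℝ),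
      euclNorm (xtil t) + euclNorm (wtil t) + (⨆ i, ⨆ j, |xhat t i - xhat t j|)
        ≤ C * Real.exp (-β * t) := by
  have : Nontrivial (Fin n) := Fin.nontrivial_iff_two_le.2 hn
  have hnpos : (0 : ℝ) < n := by positivity
  have hd1 : ∀ i, (1 : ℝ) ≤ G.degree i := fun i => by
    exact_mod_cast hG.preconnected.degree_pos_of_nontrivial i
  have hdn : ∀ i, (G.degree i : ℝ) ≤ n := fun i => by
    exact_mod_cast (by simpa using (G.degree_lt_card_verts i).le)
  obtain ⟨ε, hε, hε1, hεα, hε2, hεN⟩ : ∃ ε : ℝ, 0 < ε ∧ ε ≤ 1 ∧ ε ≤ α ∧ 4 * ε ^ 2 ≤ α ∧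
      ε * ((n : ℝ) ^ 2 + 2 * α) ≤ α := by
    have hk : ∃ ε : ℝ, 0 < ε ∧ ε * ((n : ℝ) ^ 2 + 2 * α + 4) = α :=
      ⟨α / ((n : ℝ) ^ 2 + 2 * α + 4), by positivity, by field_simp⟩
    obtain ⟨ε, h0, h1⟩ := hk
    have p1 : 0 < ε * (n : ℝ) ^ 2 := by positivity
    have p2 : 0 < ε * α := by positivity
    have h2 : ε ≤ 1 / 2 := by nlinarith
    exact ⟨ε, h0, by linarith, by nlinarith, by nlinarith, by nlinarith⟩
  have hx : ∀ t ≥ (0 : ℝ), ∀ i, HasDerivAt (fun s => xtil s i)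
      (-(G.degree i : ℝ) * xtil t i - wtil t i) t := fun t ht i => by
    have := hasDerivAt_pi.1 (hxtil t ht) i
    simpa [Matrix.mulVec_diagonal] using this
  have hw : ∀ t ≥ (0 : ℝ), ∀ i, HasDerivAt (fun s => wtil s i) (α * xtil t i) t :=
    fun t ht i => by simpa using hasDerivAt_pi.1 (hwtil t ht) i
  let V : ℝ → ℝ := fun t =>
    ∑ i, (α * xtil t i ^ 2 + wtil t i ^ 2 + 2 * ε * xtil t i * wtil t i)
  have hVlow : ∀ t, α / 2 * ∑ i, xtil t i ^ 2 + 1 / 2 * ∑ i, wtil t i ^ 2 ≤ V t := fun t => by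
    rw [Finset.mul_sum, Finset.mul_sum, ← Finset.sum_add_distrib]
    exact Finset.sum_le_sum fun i _ => lyapunov_lower hε2 _ _
  have hsx : ∀ t, 0 ≤ ∑ i, xtil t i ^ 2 := fun t => Finset.sum_nonneg fun i _ => sq_nonneg _
  have hsw : ∀ t, 0 ≤ ∑ i, wtil t i ^ 2 := fun t => Finset.sum_nonneg fun i _ => sq_nonneg _
  obtain ⟨C₁, hC₁, b, hb, hV⟩ := exp_decay V
    (fun t => ∑ i, (2 * α * xtil t i * (-(G.degree i : ℝ) * xtil t i - wtil t i)
      + 2 * wtil t i * (α * xtil t i)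
      + 2 * ε * ((-(G.degree i : ℝ) * xtil t i - wtil t i) * wtil t i
        + xtil t i * (α * xtil t i))))
    (ε / 2) 1 0 (by positivity) one_pos le_rfl
    (fun t ht => by
      refine HasDerivAt.fun_sum fun i _ => ?_
      have h1 := (((hx t ht i).fun_pow 2).const_mul α).fun_add ((hw t ht i).fun_pow 2)
      have h2 := h1.fun_add (((hx t ht i).const_mul (2 * ε)).fun_mul (hw t ht i))
      convert h2 using 1
      push_cast
      ring)
    (fun t => le_trans (by have := hsx t; have := hsw t; positivity) (hVlow t))
    (fun t _ => by
      rw [zero_mul, add_zero, Finset.mul_sum]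
      exact Finset.sum_le_sum fun i _ =>
        lyapunov_decay hα hε hε1 hεα (hd1 i) (hdn i) hεN _ _)
  have hX : ∀ t ≥ (0 : ℝ), ∑ i, xtil t i ^ 2 ≤ 2 * C₁ / α * Real.exp (-b * t) := fun t ht => by
    have h1 := hV t ht
    have h2 := hVlow t
    have h3 := hsw t
    rw [div_mul_eq_mul_div, le_div_iff₀ hα]
    nlinarith
  have hW : ∀ t ≥ (0 : ℝ), ∑ i, wtil t i ^ 2 ≤ 2 * C₁ * Real.exp (-b * t) := fun t ht => by
    have h1 := hV t ht
    have h2 := hVlow t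
    have h3 : 0 ≤ α / 2 * ∑ i, xtil t i ^ 2 := mul_nonneg (by positivity) (hsx t)
    linarith
  -- The forcing term `g = A x̃` inherits the decay of `x̃` through Cauchy-Schwarz.
  let g : ℝ → Fin n → ℝ := fun t => (G.adjMatrix ℝ).mulVec (xtil t)
  have hg : ∀ t i, g t i ^ 2 ≤ n * ∑ j, xtil t j ^ 2 := fun t i => by
    have h1 : g t i = ∑ j, G.adjMatrix ℝ i j * xtil t j := rfl
    rw [h1]
    refine (Finset.sum_mul_sq_le_sq_mul_sq _ _ _).trans ?_
    refine mul_le_mul_of_nonneg_right ?_ (hsx t)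
    calc ∑ j, G.adjMatrix ℝ i j ^ 2 ≤ ∑ j : Fin n, (1 : ℝ) :=
          Finset.sum_le_sum fun j _ => by
            rw [SimpleGraph.adjMatrix_apply]; split_ifs <;> norm_num
      _ = n := by simp
  have hgg : ∀ t, ∑ i, ∑ j, (g t i - g t j) ^ 2 ≤ 4 * n ^ 3 * ∑ j, xtil t j ^ 2 := fun t => by
    calc ∑ i, ∑ j, (g t i - g t j) ^ 2
        ≤ ∑ i : Fin n, ∑ j : Fin n, (4 * (n * ∑ j, xtil t j ^ 2)) :=
          Finset.sum_le_sum fun i _ => Finset.sum_le_sum fun j _ => by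
            nlinarith [hg t i, hg t j, sq_nonneg (g t i + g t j)]
      _ = _ := by simp; ring
  obtain ⟨K, hK, hP⟩ := poincare G hG
  let P : ℝ → ℝ := fun t => ∑ i, ∑ j, (xhat t i - xhat t j) ^ 2
  let F : ℝ → Fin n → ℝ := fun t => -(G.lapMatrix ℝ).mulVec (xhat t) + g t
  have hP0 : ∀ t, 0 ≤ P t := fun t =>
    Finset.sum_nonneg fun i _ => Finset.sum_nonneg fun j _ => sq_nonneg _
  obtain ⟨C₂, hC₂, c, hc, hPd⟩ := exp_decay P
    (fun t => ∑ i, ∑ j, 2 * ((xhat t i - xhat t j) * (F t i - F t j)))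
    (2 * n / K) b (K / (2 * n) * (4 * n ^ 3 * (2 * C₁ / α)))
    (by positivity) hb (by positivity)
    (fun t ht => by
      refine HasDerivAt.fun_sum fun i _ => HasDerivAt.fun_sum fun j _ => ?_
      have hi := hasDerivAt_pi.1 (hxhat t ht) i
      have hj := hasDerivAt_pi.1 (hxhat t ht) j
      refine ((hi.fun_sub hj).fun_pow 2).congr_deriv ?_
      simp only [F, g]
      push_cast
      ring)
    hP0
    (fun t ht => by
      -- The Laplacian part contributes `-4 n` times its quadratic form.
      have e1 : ∑ i, ∑ j, 2 * ((xhat t i - xhat t j) * (F t i - F t j))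
          = -4 * n * (∑ i, xhat t i * (G.lapMatrix ℝ).mulVec (xhat t) i)
            + ∑ i, ∑ j, 2 * ((xhat t i - xhat t j) * (g t i - g t j)) := by
        simp only [← Finset.mul_sum, sum_pair]
        simp only [F, Pi.add_apply, Pi.neg_apply, mul_add, mul_neg, Finset.sum_add_distrib,
          Finset.sum_neg_distrib, sum_lap]
        ring
      -- Young's inequality, weighted to absorb half of the dissipation.
      have e2 : ∑ i, ∑ j, 2 * ((xhat t i - xhat t j) * (g t i - g t j))
          ≤ 2 * n / K * P t + K / (2 * n) * ∑ i, ∑ j, (g t i - g t j) ^ 2 := by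
        simp only [P, Finset.mul_sum, ← Finset.sum_add_distrib]
        refine Finset.sum_le_sum fun i _ => Finset.sum_le_sum fun j _ => ?_
        generalize xhat t i - xhat t j = u
        generalize g t i - g t j = v
        have h1 : 0 ≤ K / (2 * n) * (2 * n / K * u - v) ^ 2 := by positivity
        have h2 : K / (2 * n) * (2 * n / K * u - v) ^ 2
            = 2 * n / K * u ^ 2 + K / (2 * n) * v ^ 2 - 2 * (u * v) := by
          field_simp
          ring
        linarith
      have e3 : 4 * n / K * P t
          ≤ 4 * n * (∑ i, xhat t i * (G.lapMatrix ℝ).mulVec (xhat t) i) := by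
        rw [div_mul_eq_mul_div, div_le_iff₀ hK]
        have := mul_le_mul_of_nonneg_left (hP (xhat t)) (by positivity : (0 : ℝ) ≤ 4 * n)
        simp only [P]
        linarith
      have e4 : K / (2 * n) * ∑ i, ∑ j, (g t i - g t j) ^ 2
          ≤ K / (2 * n) * (4 * n ^ 3 * (2 * C₁ / α)) * Real.exp (-b * t) := by
        rw [mul_assoc, mul_assoc (4 * (n : ℝ) ^ 3)]
        refine mul_le_mul_of_nonneg_left ?_ (by positivity)
        exact (hgg t).trans (mul_le_mul_of_nonneg_left (hX t ht) (by positivity))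
      have e5 : 4 * n / K * P t = 2 * (2 * n / K * P t) := by ring
      rw [e1]
      linarith)
  refine ⟨√(2 * C₁ / α) + √(2 * C₁) + √C₂, by positivity, min (b / 2) (c / 2), by positivity,
    fun t ht => ?_⟩
  have s1 := sqrt_decay ht (min_le_left (b / 2) (c / 2)) (hX t ht)
  have s2 := sqrt_decay ht (min_le_left (b / 2) (c / 2)) (hW t ht)
  have s3 := sqrt_decay ht (min_le_right (b / 2) (c / 2)) (hPd t ht)
  have s4 : (⨆ i, ⨆ j, |xhat t i - xhat t j|) ≤ √(P t) := by
    refine ciSup_le fun i => ciSup_le fun j => Real.abs_le_sqrt ?_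
    calc (xhat t i - xhat t j) ^ 2 ≤ ∑ j, (xhat t i - xhat t j) ^ 2 :=
          Finset.single_le_sum (f := fun j => (xhat t i - xhat t j) ^ 2)
            (fun j _ => sq_nonneg _) (Finset.mem_univ j)
      _ ≤ P t := Finset.single_le_sum (f := fun i => ∑ j, (xhat t i - xhat t j) ^ 2)
            (fun i _ => Finset.sum_nonneg fun j _ => sq_nonneg _) (Finset.mem_univ i)
  unfold euclNorm
  linarith
end

section
/- Let A, B, C ∈ ℝ^{n×n} with A and C symmetric, A nonsingular, and B symmetric positive definite. Consider the quadratic matrix polynomial Z(λ) = A·λ² + B·λ + C and let p(λ) = det(Z(λ)), a real polynomial of degree 2n. Counting the complex roots of p with multiplicity, the number of roots with positive real part equals n₋(A) + n₋(C), the number of roots with negative real part equals n₊(A) + n₊(C), and the number of roots with zero real part equals n₀(C), where for a symmetric real matrix X, n₊(X), n₋(X), n₀(X) denote the numbers of positive, negative, and zero eigenvalues of X counted with multiplicity; in particular these three root counts sum to 2n. -/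
/-!
The polynomial `p` equals `det A` times the characteristic polynomial of the companion matrix
`T = [-A⁻¹B, -A⁻¹C; 1, 0]` (`det_quadratic`), so its roots are the eigenvalues of `T`, and root
counts are dimensions of sums of generalized eigenspaces of `T` (`card_filter_roots`).

Let `H = diag(A, C)`. For `v = (y, x)` one has `Re H(v, T v) = -y* B y ≤ 0`
(`energy_companionEnd`): `B` acts as damping for the energy `H`. Consequently `H` is negative
semidefinite on the spectral subspace `W` of `T` for `Re λ > 0`. This is Lyapunov's inequality
(`lyapunov_nonpos`), proved by splitting off one eigenvector at a time. A vector of `W` isotropic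
for `H` lies in the radical of `H` on `W`, so it dissipates nothing, nor does its image under `T`.
As `B` is definite it is then in `ker T` (`companionEnd_eq_zero_of_energy`), hence zero. So `H` is
negative definite on `W` and `dim W ≤ n₋(A) + n₋(C)` (`finrank_le_of_dissipative`, `card_pos_le`).
Replacing `T, H` by `-T, -H` gives the bound `n₊(A) + n₊(C)` for `Re λ < 0` (`card_neg_le`).

An eigenvalue on the imaginary axis must be `0` and is semisimple, with eigenspace
`{(0, x) | C x = 0}`, so there are at most `n₀(C)` roots with `Re λ = 0` (`card_zero_le`). Since
`n₀(A) = 0`, the three upper bounds add up to `2n`, which is the number of roots; all three are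
therefore equalities.
-/

open Matrix Polynomial

/-- Number of positive eigenvalues (with multiplicity) of a Hermitian real matrix. -/
noncomputable def inertiaPos {n : ℕ} {X : Matrix (Fin n) (Fin n) ℝ}
    (hX : X.IsHermitian) : ℕ :=
  (Finset.univ.filter fun i => 0 < hX.eigenvalues i).card

/-- Number of negative eigenvalues (with multiplicity) of a Hermitian real matrix. -/
noncomputable def inertiaNeg {n : ℕ} {X : Matrix (Fin n) (Fin n) ℝ}
    (hX : X.IsHermitian) : ℕ :=
  (Finset.univ.filter fun i => hX.eigenvalues i < 0).card

/-- Number of zero eigenvalues (with multiplicity) of a Hermitian real matrix. -/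
noncomputable def inertiaZero {n : ℕ} {X : Matrix (Fin n) (Fin n) ℝ}
    (hX : X.IsHermitian) : ℕ :=
  (Finset.univ.filter fun i => hX.eigenvalues i = 0).card

/-! ### Negative semidefinite Hermitian forms and Lyapunov's inequality -/

/-- An isotropic vector of a negative semidefinite Hermitian form lies in its radical
(equality case of Cauchy–Schwarz). -/
theorem form_apply_eq_zero {W : Type*} [AddCommGroup W] [Module ℂ W]
    (K : W →ₗ⋆[ℂ] W →ₗ[ℂ] ℂ) (hK : ∀ x y, star (K x y) = K y x)
    (hneg : ∀ w, (K w w).re ≤ 0) {v : W} (hv : (K v v).re = 0) (y : W) : K v y = 0 := by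
  by_contra hc
  have hpos : 0 < Complex.normSq (K v y) := Complex.normSq_pos.mpr hc
  -- With this `r`, the value of the form at `r K(v,y) v + y` has real part
  -- `2 r |K(v,y)|² + Re K(y,y) = 1 > 0`.
  set r : ℝ := (1 - (K y y).re) / (2 * Complex.normSq (K v y)) with hr
  have hr' : r * (2 * Complex.normSq (K v y)) = 1 - (K y y).re := by
    rw [hr]; field_simp
  have hvv : K v v = 0 := by
    apply Complex.ext hv
    have := congrArg Complex.im (hK v v)
    simp at this ⊢
    linarith
  have h := hneg (((r : ℂ) * K v y) • v + y)
  have hyv : K y v = star (K v y) := (hK v y).symm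
  simp [hvv, hyv] at h
  simp [Complex.normSq_apply] at hr'
  nlinarith

theorem form_self_im {W : Type*} [AddCommGroup W] [Module ℂ W]
    (K : W →ₗ⋆[ℂ] W →ₗ[ℂ] ℂ) (hK : ∀ x y, star (K x y) = K y x) (v : W) : (K v v).im = 0 := by
  have := congrArg Complex.im (hK v v)
  simp at this
  linarith

/-- If `Re H(w, T w) ≤ 0` for all `w`, the Hermitian form `Re H(w, T w)`, up to a factor `2` the
form `H(x, T y) + H(T x, y)`, is negative semidefinite, so its isotropic vectors lie in its
radical. -/
theorem dissipation_apply_eq_zero {W : Type*} [AddCommGroup W] [Module ℂ W]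
    (T : Module.End ℂ W) (H : W →ₗ⋆[ℂ] W →ₗ[ℂ] ℂ) (hH : ∀ x y, star (H x y) = H y x)
    (hd : ∀ w, (H w (T w)).re ≤ 0) {v : W} (hv : (H v (T v)).re = 0) (y : W) :
    H v (T y) + H (T v) y = 0 := by
  have hre : ∀ w, (H (T w) w).re = (H w (T w)).re := fun w => by rw [← hH]; simp
  refine form_apply_eq_zero (H.compl₂ T + H.comp T) (fun x y => ?_) (fun w => ?_) ?_ y
  · have e1 := hH x (T y)
    have e2 := hH (T x) y
    simp only [LinearMap.add_apply, LinearMap.compl₂_apply, LinearMap.comp_apply, star_add,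
      e1, e2]
    ring
  · have h1 := hd w
    simp [hre]
    linarith
  · simp [hre, hv]

universe u

/-- Lyapunov's inequality, in algebraic form: if `Re H(w, S w) ≤ 0` for all `w` and every
eigenvalue of `S` has positive real part, then `H` is negative semidefinite. The spectral
hypothesis is phrased as surjectivity of `S - μ` for `Re μ ≤ 0` because surjectivity passes at
once to the compression of `S` to a complement of an eigenvector, which drives the induction on
the dimension `d`. -/
theorem lyapunov_nonpos (d : ℕ) : ∀ (W : Type u) [AddCommGroup W] [Module ℂ W]
    [FiniteDimensional ℂ W], Module.finrank ℂ W = d → ∀ (S : Module.End ℂ W)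
    (_ : ∀ μ : ℂ, μ.re ≤ 0 → Function.Surjective (fun w => S w - μ • w))
    (H : W →ₗ⋆[ℂ] W →ₗ[ℂ] ℂ) (_ : ∀ x y, star (H x y) = H y x)
    (_ : ∀ w, (H w (S w)).re ≤ 0), ∀ w, (H w w).re ≤ 0 := by
  induction d with
  | zero =>
    intro W _ _ _ hW S _ H _ _ w
    have := Module.finrank_zero_iff.mp hW
    rw [Subsingleton.elim w 0]; simp
  | succ d ih =>
    intro W _ _ _ hW S hS H hH hd
    have : Nontrivial W := Module.nontrivial_of_finrank_pos (R := ℂ) (by omega)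
    obtain ⟨l, hl⟩ := Module.End.exists_eigenvalue S
    obtain ⟨v, hv⟩ := hl.exists_hasEigenvector
    have hv0 : v ≠ 0 := hv.2
    have hSv : S v = l • v := hv.apply_eq_smul
    have hlre : 0 < l.re := by
      by_contra hneg
      have hsurj : Function.Surjective (S - l • (1 : Module.End ℂ W)) := by
        intro y; obtain ⟨x, hx⟩ := hS l (not_lt.mp hneg) y
        exact ⟨x, by simpa using hx⟩
      have hinj := LinearMap.injective_iff_surjective.mpr hsurj
      exact hv0 (hinj (by simp [hSv]))
    have him := form_self_im H hH v
    -- `Re H(v, S v) = Re l · H(v, v)`, so the sign of `H(v, v)` follows from `Re l > 0`.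
    have hvv : (H v v).re ≤ 0 := by
      have := hd v
      rw [hSv] at this
      simp [him] at this
      by_contra h
      nlinarith
    -- A complement of the line of `v` that is `H`-orthogonal to `v`: its orthogonal space if
    -- `H(v, v) ≠ 0`; any complement at all if `H(v, v) = 0`, since then `v` is in the radical.
    obtain ⟨U, hU, hUv⟩ : ∃ U : Submodule ℂ W, IsCompl (Submodule.span ℂ {v}) U ∧
        ∀ u ∈ U, H v u = 0 := by
      by_cases h0 : H v v = 0
      · obtain ⟨U, hU⟩ := Submodule.exists_isCompl (Submodule.span ℂ {v})
        refine ⟨U, hU, fun u _ => ?_⟩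
        have hQ := dissipation_apply_eq_zero S H hH hd (v := v) (by simp [hSv, h0])
        -- `H v ((S + conj l) x) = 0` for all `x`, and `S + conj l` is onto since `-conj l` lies in
        -- the closed left half-plane.
        obtain ⟨x, hx⟩ := hS (-(star l)) (by simpa using hlre.le) u
        have := hQ x
        simp [hSv] at this
        rw [← hx]; simp
        linear_combination this
      · refine ⟨LinearMap.ker (H v), ?_, fun u hu => hu⟩
        refine ⟨?_, codisjoint_iff.2 ((H v).span_singleton_sup_ker_eq_top h0)⟩
        rw [disjoint_comm, Submodule.disjoint_span_singleton' hv0]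
        exact h0
    let π : W →ₗ[ℂ] U := Submodule.projectionOnto U (Submodule.span ℂ {v}) hU.symm
    have hπ : ∀ w, ∃ a : ℂ, w = a • v + (π w : W) := by
      intro w
      have h : w - π w ∈ Submodule.span ℂ {v} := by
        rw [← Submodule.ker_projectionOnto hU.symm, LinearMap.mem_ker, map_sub,
          Submodule.projectionOnto_apply_left, sub_self]
      obtain ⟨a, ha⟩ := Submodule.mem_span_singleton.mp h
      exact ⟨a, by rw [ha]; abel⟩
    have hπv : π v = 0 :=
      (Submodule.projectionOnto_apply_eq_zero_iff hU.symm).mpr (Submodule.mem_span_singleton_self v)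
    have hUv' : ∀ u ∈ U, H u v = 0 := fun u hu => by rw [← hH, hUv u hu]; simp
    have hfin : Module.finrank ℂ U = d := by
      have := Submodule.finrank_add_eq_of_isCompl hU
      rw [finrank_span_singleton hv0] at this
      omega
    -- The induction hypothesis applies to the compression `π ∘ S` of `S` to `U`.
    have key := ih U hfin (π ∘ₗ S ∘ₗ U.subtype) (by
      intro μ hμ y
      obtain ⟨x, hx⟩ := hS μ hμ (y : W)
      refine ⟨π x, ?_⟩
      obtain ⟨a, ha⟩ := hπ x
      have h1 : π (S x) = π (S (π x)) := by
        conv_lhs => rw [ha]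
        simp [hSv, hπv]
      have h2 : π (y : W) = y := by simp [π]
      simp only [LinearMap.comp_apply, Submodule.subtype_apply]
      have hx' : S x - μ • x = y := hx
      rw [← h1, ← map_smul, ← map_sub, hx', h2]) (H.domRestrict₁₂ U U)
      (fun x y => hH x y) (fun u => by
        obtain ⟨a, ha⟩ := hπ (S u)
        have h1 := hd u
        rw [ha] at h1
        simpa [hUv' u u.2, LinearMap.domRestrict₁₂_apply] using h1)
    intro w
    obtain ⟨a, ha⟩ := hπ w
    have h1 := key (π w)
    simp only [LinearMap.domRestrict₁₂_apply] at h1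
    rw [ha]
    simp [hUv _ (π w).2, hUv' _ (π w).2, him]
    nlinarith [mul_nonneg (mul_self_nonneg a.re) (neg_nonneg.mpr hvv),
      mul_nonneg (mul_self_nonneg a.im) (neg_nonneg.mpr hvv)]

/-- Dimension bound for an invariant subspace `W` on which all eigenvalues of `T` have positive
real part, when `T` dissipates the Hermitian form `H`. By Lyapunov's inequality `H` is negative
semidefinite on `W`; the observability hypothesis `hobs` makes it definite there. Hence a linear
map `φ` to `ℂ^ι` such that `H` is nonnegative on `ker φ` is injective on `W`. -/
theorem finrank_le_of_dissipative {V ι : Type*} [AddCommGroup V] [Module ℂ V]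
    [FiniteDimensional ℂ V] [Fintype ι] (T : Module.End ℂ V) (H : V →ₗ⋆[ℂ] V →ₗ[ℂ] ℂ)
    (hH : ∀ x y, star (H x y) = H y x) (hd : ∀ w, (H w (T w)).re ≤ 0)
    (hobs : ∀ w, (H w (T w)).re = 0 → (H (T w) (T (T w))).re = 0 → T w = 0)
    (W : Submodule ℂ V) (hW : ∀ w ∈ W, T w ∈ W)
    (hinj : ∀ μ : ℂ, μ.re ≤ 0 → ∀ w ∈ W, T w = μ • w → w = 0)
    (φ : V →ₗ[ℂ] (ι → ℂ)) (hφ : ∀ w, φ w = 0 → 0 ≤ (H w w).re) :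
    Module.finrank ℂ W ≤ Fintype.card ι := by
  have hneg : ∀ w : W, (H.domRestrict₁₂ W W w w).re ≤ 0 := by
    refine lyapunov_nonpos _ W rfl (T.restrict hW) (fun μ hμ => ?_) (H.domRestrict₁₂ W W)
      (fun x y => hH x y) (fun w => hd w)
    have hi : Function.Injective (T.restrict hW - μ • (1 : Module.End ℂ W)) := by
      rw [injective_iff_map_eq_zero]
      intro w hw
      have hw' := congrArg (Subtype.val) hw
      simp [sub_eq_zero] at hw'
      exact Subtype.ext (hinj μ hμ w w.2 hw')
    intro y
    obtain ⟨x, hx⟩ := LinearMap.injective_iff_surjective.mp hi y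
    exact ⟨x, by simpa using hx⟩
  have hinjφ : Function.Injective (φ ∘ₗ W.subtype) := by
    rw [injective_iff_map_eq_zero]
    intro w hw
    -- `w` is isotropic, hence in the radical of `H` on `W`. As `W` is invariant, `w` and `T w`
    -- both have zero dissipation, and observability gives `T w = 0`.
    have h0 : (H w w).re = 0 := le_antisymm (hneg w) (hφ w hw)
    have hrad : ∀ u : W, H w u = 0 := fun u =>
      form_apply_eq_zero (H.domRestrict₁₂ W W) (fun x y => hH x y) hneg (v := w) h0 u
    have hQ : ∀ u, H w (T u) + H (T w) u = 0 := by
      refine dissipation_apply_eq_zero T H hH hd ?_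
      have e1 := hrad ⟨T w, hW w w.2⟩
      simp only at e1
      simp [e1]
    have hTw : T w = 0 := by
      refine hobs w ?_ ?_
      · have e1 := hrad ⟨T w, hW w w.2⟩
        simp only at e1
        simp [e1]
      · have e := hQ (T (T (w : V)))
        have e1 := hrad ⟨T (T (T w)), hW _ (hW _ (hW w w.2))⟩
        simp only at e1
        rw [e1, zero_add] at e
        simp [e]
    exact Subtype.ext (hinj 0 le_rfl w w.2 (by simpa using hTw))
  simpa using LinearMap.finrank_le_finrank_of_injective hinjφ

/-! ### Sums of generalized eigenspaces -/

theorem finrank_sup_maxGenEigenspace {V : Type*} [AddCommGroup V] [Module ℂ V]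
    [FiniteDimensional ℂ V] (T : Module.End ℂ V) (s : Finset ℂ) :
    Module.finrank ℂ (s.sup T.maxGenEigenspace : Submodule ℂ V)
      = ∑ μ ∈ s, T.charpoly.rootMultiplicity μ := by
  induction s using Finset.induction_on with
  | empty => simp
  | insert μ s hμ ih =>
    rw [Finset.sup_insert, Finset.sum_insert hμ, ← ih, ← LinearMap.finrank_maxGenEigenspace_eq]
    have hdis : Disjoint (T.maxGenEigenspace μ) (s.sup T.maxGenEigenspace) :=
      (T.independent_maxGenEigenspace μ).mono_right (Finset.sup_le fun ν hν =>
        le_iSup₂_of_le ν (fun h : ν = μ => hμ (h ▸ hν)) le_rfl)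
    have := Submodule.finrank_sup_add_finrank_inf_eq (T.maxGenEigenspace μ)
      (s.sup T.maxGenEigenspace)
    rw [hdis.eq_bot, finrank_bot] at this
    simpa using this

theorem mapsTo_sup_maxGenEigenspace {V : Type*} [AddCommGroup V] [Module ℂ V]
    (T : Module.End ℂ V) (s : Finset ℂ) :
    s.sup T.maxGenEigenspace ≤ (s.sup T.maxGenEigenspace).comap T :=
  Finset.sup_le fun μ hμ _ hw =>
    (Finset.le_sup (f := T.maxGenEigenspace) hμ)
      (Module.End.mapsTo_maxGenEigenspace_of_comm (Commute.refl T) μ hw)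

theorem eq_zero_of_mem_sup_maxGenEigenspace {V : Type*} [AddCommGroup V] [Module ℂ V]
    (T : Module.End ℂ V) (s : Finset ℂ) {μ : ℂ} (hμ : μ ∉ s) {w : V}
    (hw : w ∈ s.sup T.maxGenEigenspace) (h : T w = μ • w) : w = 0 := by
  have hdis : Disjoint (T.maxGenEigenspace μ) (s.sup T.maxGenEigenspace) :=
    (T.independent_maxGenEigenspace μ).mono_right (Finset.sup_le fun ν hν =>
      le_iSup₂_of_le ν (fun h : ν = μ => hμ (h ▸ hν)) le_rfl)
  refine Submodule.disjoint_def.mp hdis w ?_ hw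
  exact (Module.End.genEigenspace T μ).monotone le_top (Module.End.mem_eigenspace_iff.mpr h)

/-- The number of roots of the characteristic polynomial satisfying `P`, with multiplicity, is
the dimension of the sum of the corresponding generalized eigenspaces. -/
theorem card_filter_roots {V : Type*} [AddCommGroup V] [Module ℂ V]
    [FiniteDimensional ℂ V] (T : Module.End ℂ V) (P : ℂ → Prop) [DecidablePred P] :
    (T.charpoly.roots.filter P).card = Module.finrank ℂ
      ((T.charpoly.roots.toFinset.filter P).sup T.maxGenEigenspace : Submodule ℂ V) := by
  classical
  rw [finrank_sup_maxGenEigenspace, ← Multiset.toFinset_filter, ← Multiset.toFinset_sum_count_eq]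
  refine Finset.sum_congr rfl fun μ hμ => ?_
  rw [Multiset.count_filter_of_pos, Polynomial.count_roots]
  exact Multiset.of_mem_filter (Multiset.mem_toFinset.mp hμ)

/-! ### Linearization of the quadratic matrix polynomial -/

/-- `det (A λ² + B λ + C)` is `det A` times the characteristic polynomial of the companion matrix
`[-A⁻¹B, -A⁻¹C; 1, 0]`. -/
theorem det_quadratic {n : ℕ} (A B C : Matrix (Fin n) (Fin n) ℝ) (hA : IsUnit A.det) :
    Matrix.det ((X : ℝ[X]) ^ 2 • A.map Polynomial.C
      + (X : ℝ[X]) • B.map Polynomial.C + C.map Polynomial.C)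
      = Polynomial.C A.det * (fromBlocks (-(A⁻¹ * B)) (-(A⁻¹ * C)) 1 0).charpoly := by
  have hchar : (fromBlocks (-(A⁻¹ * B)) (-(A⁻¹ * C)) 1 0 :
      Matrix (Fin n ⊕ Fin n) (Fin n ⊕ Fin n) ℝ).charmatrix
      = fromBlocks ((X : ℝ[X]) • 1 + (A⁻¹ * B).map Polynomial.C) ((A⁻¹ * C).map Polynomial.C)
          (-1) ((X : ℝ[X]) • 1) := by
    rw [charmatrix_fromBlocks]
    refine fromBlocks_inj.mpr ⟨?_, ?_, ?_, ?_⟩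
    · rw [charmatrix, Matrix.smul_one_eq_diagonal]
      ext1 i j
      simp [Matrix.scalar_apply, -Matrix.map_mul]
    · ext1 i j; simp
    · ext1 i j; simp [Matrix.one_apply, apply_ite]
    · rw [charmatrix, Matrix.smul_one_eq_diagonal]; simp [Matrix.scalar_apply]
  -- The unimodular matrix `[λ, -1; 1, 0]` brings `λ - companion` to block triangular form.
  have hJ : (fromBlocks ((X : ℝ[X]) • 1) (-1) 1 0 :
      Matrix (Fin n ⊕ Fin n) (Fin n ⊕ Fin n) ℝ[X]).det = 1 := by
    have : (fromBlocks ((X : ℝ[X]) • 1) (-1) 1 0 : Matrix (Fin n ⊕ Fin n) (Fin n ⊕ Fin n) ℝ[X])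
        = fromBlocks 1 ((X : ℝ[X]) • 1) 0 1 * (fromBlocks 1 (-1) 0 1 * fromBlocks 1 0 1 1
            * fromBlocks 1 (-1) 0 1) := by
      simp [fromBlocks_multiply]
    rw [this]
    simp
  have hAA : A.map Polynomial.C * (A⁻¹).map Polynomial.C = 1 := by
    rw [← Matrix.map_mul, Matrix.mul_nonsing_inv _ hA, Matrix.map_one _ (map_zero _) (map_one _)]
  have hprod : fromBlocks ((X : ℝ[X]) • 1 + (A⁻¹ * B).map Polynomial.C)
        ((A⁻¹ * C).map Polynomial.C) (-1) ((X : ℝ[X]) • 1) * fromBlocks ((X : ℝ[X]) • 1) (-1) 1 0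
      = (fromBlocks ((X : ℝ[X]) ^ 2 • 1 + (X : ℝ[X]) • (A⁻¹ * B).map Polynomial.C
          + (A⁻¹ * C).map Polynomial.C)
          (-((X : ℝ[X]) • 1 + (A⁻¹ * B).map Polynomial.C)) 0 1 :
            Matrix (Fin n ⊕ Fin n) (Fin n ⊕ Fin n) ℝ[X]) := by
    rw [fromBlocks_multiply]
    simp [smul_smul, pow_two]
  have hdet := congrArg Matrix.det hprod
  rw [det_mul, hJ, mul_one, det_fromBlocks_zero₂₁, det_one, mul_one] at hdet
  rw [Matrix.charpoly, hchar, hdet, RingHom.map_det, ← det_mul]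
  congr 1
  simp [mul_add, Matrix.map_mul, ← mul_assoc, hAA, RingHom.mapMatrix_apply]

/-! ### Hermitian forms of real symmetric matrices -/

/-- The sesquilinear form `x* M y` on `ℂⁿ` of a real matrix `M`. -/
noncomputable def cform {n : ℕ} (M : Matrix (Fin n) (Fin n) ℝ) (x y : Fin n → ℂ) : ℂ :=
  star x ⬝ᵥ (M.map Complex.ofReal *ᵥ y)

/-- Coordinates of a complex vector in an orthonormal eigenbasis of a real symmetric matrix. -/
noncomputable def eigenCoord {n : ℕ} {M : Matrix (Fin n) (Fin n) ℝ} (hM : M.IsHermitian) :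
    (Fin n → ℂ) →ₗ[ℂ] (Fin n → ℂ) :=
  Matrix.toLin' ((hM.eigenvectorUnitary : Matrix (Fin n) (Fin n) ℝ).map Complex.ofReal)ᴴ

section
variable {n : ℕ} {M : Matrix (Fin n) (Fin n) ℝ}

theorem ofReal_conjTranspose (M : Matrix (Fin n) (Fin n) ℝ) :
    (M.map Complex.ofReal)ᴴ = (Mᴴ).map Complex.ofReal := by
  ext i j; simp

theorem ofReal_map_mul (M N : Matrix (Fin n) (Fin n) ℝ) :
    (M * N).map Complex.ofReal = M.map Complex.ofReal * N.map Complex.ofReal :=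
  Matrix.map_mul (f := Complex.ofRealHom)

theorem star_cform (hM : M.IsHermitian) (x y : Fin n → ℂ) : star (cform M x y) = cform M y x := by
  unfold cform
  rw [← star_dotProduct_star, star_star, star_mulVec, ofReal_conjTranspose, hM.eq,
    dotProduct_mulVec, dotProduct_comm]

theorem unitary_mul_conjTranspose (hM : M.IsHermitian) :
    (hM.eigenvectorUnitary : Matrix (Fin n) (Fin n) ℝ).map Complex.ofReal *
      ((hM.eigenvectorUnitary : Matrix (Fin n) (Fin n) ℝ).map Complex.ofReal)ᴴ = 1 := by
  rw [ofReal_conjTranspose, ← ofReal_map_mul, ← star_eq_conjTranspose,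
    Unitary.mul_star_self_of_mem (SetLike.coe_mem _)]
  simp

theorem eigenCoord_mulVec (hM : M.IsHermitian) (x : Fin n → ℂ) (i : Fin n) :
    eigenCoord hM (M.map Complex.ofReal *ᵥ x) i = hM.eigenvalues i * eigenCoord hM x i := by
  have h : (star (hM.eigenvectorUnitary : Matrix (Fin n) (Fin n) ℝ)) * M
      = diagonal hM.eigenvalues * star (hM.eigenvectorUnitary : Matrix (Fin n) (Fin n) ℝ) := by
    have hdiag := hM.conjStarAlgAut_star_eigenvectorUnitary
    rw [Unitary.conjStarAlgAut_star_apply] at hdiag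
    have hd' : (RCLike.ofReal ∘ hM.eigenvalues : Fin n → ℝ) = hM.eigenvalues := rfl
    rw [hd'] at hdiag
    rw [← hdiag, mul_assoc, Unitary.mul_star_self_of_mem (SetLike.coe_mem _), mul_one]
  have h' := congrArg (fun N => N.map Complex.ofReal) h
  simp only [ofReal_map_mul] at h'
  simp only [eigenCoord, toLin'_apply, mulVec_mulVec]
  rw [ofReal_conjTranspose, ← star_eq_conjTranspose, h', ← mulVec_mulVec, diagonal_map (by simp),
    mulVec_diagonal]

theorem eigenCoord_injective (hM : M.IsHermitian) {x : Fin n → ℂ} (h : eigenCoord hM x = 0) :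
    x = 0 := by
  have := congrArg
    (fun y => (hM.eigenvectorUnitary : Matrix (Fin n) (Fin n) ℝ).map Complex.ofReal *ᵥ y) h
  simpa [eigenCoord, unitary_mul_conjTranspose] using this

/-- On the diagonal, the form of `M` is `∑ λᵢ |xᵢ|²` in eigen-coordinates. -/
theorem cform_self (hM : M.IsHermitian) (x : Fin n → ℂ) :
    (cform M x x).re = ∑ i, hM.eigenvalues i * Complex.normSq (eigenCoord hM x i) := by
  have h : cform M x x
      = star (eigenCoord hM x) ⬝ᵥ eigenCoord hM (M.map Complex.ofReal *ᵥ x) := by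
    conv_rhs => rw [eigenCoord, toLin'_apply, toLin'_apply, star_mulVec,
      conjTranspose_conjTranspose, ← dotProduct_mulVec, mulVec_mulVec, unitary_mul_conjTranspose,
      one_mulVec]
    rfl
  rw [h, dotProduct, Complex.re_sum]
  refine Finset.sum_congr rfl fun i _ => ?_
  rw [eigenCoord_mulVec]
  simp [Complex.normSq_apply]
  ring

theorem cform_self_pos (hM : M.PosDef) {x : Fin n → ℂ} (h : (cform M x x).re ≤ 0) : x = 0 := by
  have hpos : ∀ i, 0 < hM.1.eigenvalues i := hM.eigenvalues_pos
  apply eigenCoord_injective hM.1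
  rw [cform_self hM.1] at h
  have hn : ∀ i ∈ Finset.univ, 0 ≤ hM.1.eigenvalues i * Complex.normSq (eigenCoord hM.1 x i) :=
    fun i _ => mul_nonneg (hpos i).le (Complex.normSq_nonneg _)
  have h0 := (Finset.sum_eq_zero_iff_of_nonneg hn).mp (le_antisymm h (Finset.sum_nonneg hn))
  funext i
  have := h0 i (Finset.mem_univ i)
  simpa [(hpos i).ne'] using this
end

/-! ### The energy form of the companion matrix -/

/-- Companion matrix of `A λ² + B λ + C`, acting on pairs (velocity, position). -/
noncomputable def companion {n : ℕ} (A B C : Matrix (Fin n) (Fin n) ℝ) :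
    Matrix (Fin n ⊕ Fin n) (Fin n ⊕ Fin n) ℝ :=
  fromBlocks (-(A⁻¹ * B)) (-(A⁻¹ * C)) 1 0

/-- The companion matrix as an endomorphism of `ℂ²ⁿ`. -/
noncomputable def companionEnd {n : ℕ} (A B C : Matrix (Fin n) (Fin n) ℝ) :
    Module.End ℂ (Fin n ⊕ Fin n → ℂ) :=
  Matrix.toLin' ((companion A B C).map Complex.ofReal)

/-- First block of a vector of `ℂ²ⁿ`. -/
def velocity (n : ℕ) : (Fin n ⊕ Fin n → ℂ) →ₗ[ℂ] (Fin n → ℂ) := LinearMap.funLeft ℂ ℂ Sum.inl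

/-- Second block of a vector of `ℂ²ⁿ`. -/
def position (n : ℕ) : (Fin n ⊕ Fin n → ℂ) →ₗ[ℂ] (Fin n → ℂ) := LinearMap.funLeft ℂ ℂ Sum.inr

/-- The Hermitian form of the block diagonal matrix `diag(A, C)`. -/
noncomputable def energy {n : ℕ} (A C : Matrix (Fin n) (Fin n) ℝ) :
    (Fin n ⊕ Fin n → ℂ) →ₗ⋆[ℂ] (Fin n ⊕ Fin n → ℂ) →ₗ[ℂ] ℂ :=
  LinearMap.mk₂'ₛₗ (starRingEnd ℂ) (RingHom.id ℂ)
    (fun v w => cform A (velocity n v) (velocity n w) + cform C (position n v) (position n w))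
    (by intro v v' w; simp [cform, add_dotProduct]; ring)
    (by intro c v w; simp [cform, smul_dotProduct]; ring)
    (by intro v w w'; simp [cform, mulVec_add, dotProduct_add]; ring)
    (by intro c v w; simp [cform, mulVec_smul, dotProduct_smul]; ring)

section
variable {n : ℕ} {A B C : Matrix (Fin n) (Fin n) ℝ}

theorem energy_apply (v w : Fin n ⊕ Fin n → ℂ) : energy A C v w =
    cform A (velocity n v) (velocity n w) + cform C (position n v) (position n w) := rfl

theorem ext_velocity_position {v : Fin n ⊕ Fin n → ℂ} (h1 : velocity n v = 0)
    (h2 : position n v = 0) : v = 0 := by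
  funext i
  rcases i with i | i
  · exact congrFun h1 i
  · exact congrFun h2 i

theorem position_companionEnd (v : Fin n ⊕ Fin n → ℂ) :
    position n (companionEnd A B C v) = velocity n v := by
  funext i
  simp [position, velocity, companionEnd, companion, LinearMap.funLeft, fromBlocks_map,
    fromBlocks_mulVec]

theorem mulVec_velocity_companionEnd (hA : IsUnit A.det) (v : Fin n ⊕ Fin n → ℂ) :
    A.map Complex.ofReal *ᵥ velocity n (companionEnd A B C v) =
      -(B.map Complex.ofReal *ᵥ velocity n v + C.map Complex.ofReal *ᵥ position n v) := by
  have hv : velocity n (companionEnd A B C v) = (-(A⁻¹ * B)).map Complex.ofReal *ᵥ velocity n v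
      + (-(A⁻¹ * C)).map Complex.ofReal *ᵥ position n v := by
    funext i
    simp only [velocity, position, companionEnd, companion, toLin'_apply, fromBlocks_map,
      fromBlocks_mulVec]
    rfl
  rw [hv, mulVec_add, mulVec_mulVec, mulVec_mulVec, ← ofReal_map_mul, ← ofReal_map_mul, mul_neg,
    mul_neg, Matrix.mul_nonsing_inv_cancel_left _ _ hA, Matrix.mul_nonsing_inv_cancel_left _ _ hA]
  have hneg : ∀ M : Matrix (Fin n) (Fin n) ℝ, (-M).map Complex.ofReal = -M.map Complex.ofReal := by
    intro M; ext i j; simp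
  rw [hneg, hneg, neg_mulVec, neg_mulVec, neg_add]

theorem star_energy (hA : A.IsHermitian) (hC : C.IsHermitian) (v w : Fin n ⊕ Fin n → ℂ) :
    star (energy A C v w) = energy A C w v := by
  simp only [energy_apply, star_add, star_cform hA, star_cform hC]

/-- Energy balance: for `v = (y, x)`, `Re H(v, T v) = -y* B y`, as the contributions of `C` cancel
in the real part. -/
theorem energy_companionEnd (hAinv : IsUnit A.det) (hC : C.IsHermitian)
    (v : Fin n ⊕ Fin n → ℂ) :
    (energy A C v (companionEnd A B C v)).re = -(cform B (velocity n v) (velocity n v)).re := by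
  have h1 : cform A (velocity n v) (velocity n (companionEnd A B C v)) =
      -(cform B (velocity n v) (velocity n v) + cform C (velocity n v) (position n v)) := by
    simp only [cform, mulVec_velocity_companionEnd hAinv, dotProduct_neg, dotProduct_add]
  have h2 : (cform C (position n v) (velocity n v)).re
      = (cform C (velocity n v) (position n v)).re := by
    rw [← star_cform hC]; simp
  rw [energy_apply, position_companionEnd, h1]
  simp [h2]

theorem cform_nonneg (hB : B.PosDef) (y : Fin n → ℂ) : 0 ≤ (cform B y y).re := by
  by_contra h
  have := cform_self_pos hB (not_le.mp h).le
  subst this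
  simp [cform] at h

/-- Observability: if neither `v` nor `T v` dissipates energy, then both velocities vanish, and
the velocity of `v` is the position of `T v`, so `T v = 0`. -/
theorem companionEnd_eq_zero_of_energy (hAinv : IsUnit A.det) (hC : C.IsHermitian)
    (hB : B.PosDef) (v : Fin n ⊕ Fin n → ℂ)
    (h1 : (energy A C v (companionEnd A B C v)).re = 0)
    (h2 : (energy A C (companionEnd A B C v) (companionEnd A B C (companionEnd A B C v))).re = 0) :
    companionEnd A B C v = 0 := by
  rw [energy_companionEnd hAinv hC] at h1 h2
  refine ext_velocity_position (cform_self_pos hB (by linarith)) ?_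
  rw [position_companionEnd]
  exact cform_self_pos hB (by linarith)

/-- The eigenvalue `0` of `T` is semisimple: if `T² v = 0` with `v = (y, x)`, then `C y = 0` and
`B y = -C x`, whence `y* B y = -y* C x = 0` and `y = 0`. -/
theorem companionEnd_eq_zero_of_sq (hAinv : IsUnit A.det) (hC : C.IsHermitian) (hB : B.PosDef)
    (v : Fin n ⊕ Fin n → ℂ) (h : companionEnd A B C (companionEnd A B C v) = 0) :
    companionEnd A B C v = 0 := by
  have hy' : velocity n (companionEnd A B C v) = 0 := by
    rw [← position_companionEnd, h, map_zero]
  refine ext_velocity_position hy' ?_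
  rw [position_companionEnd]
  have e1 := mulVec_velocity_companionEnd (B := B) (C := C) hAinv (companionEnd A B C v)
  have e2 := mulVec_velocity_companionEnd (B := B) (C := C) hAinv v
  rw [h, hy', position_companionEnd] at e1
  rw [hy'] at e2
  rw [map_zero, mulVec_zero, mulVec_zero, zero_add, zero_eq_neg] at e1
  rw [mulVec_zero, zero_eq_neg] at e2
  apply cform_self_pos hB
  have e3 : B.map Complex.ofReal *ᵥ velocity n v = -(C.map Complex.ofReal *ᵥ position n v) :=
    eq_neg_of_add_eq_zero_left e2
  have e4 : cform C (velocity n v) (position n v) = 0 := by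
    rw [← star_cform hC, cform, e1]
    simp
  have e5 : cform B (velocity n v) (velocity n v) = 0 := by
    rw [cform, e3, dotProduct_neg]
    simpa [cform] using e4
  simp [e5]

/-- The eigen-coordinates of the velocity for `A` and of the position for `C` that belong to
eigenvalues satisfying `P`. -/
noncomputable def selectedCoords (hA : A.IsHermitian) (hC : C.IsHermitian) (P : ℝ → Prop) :
    (Fin n ⊕ Fin n → ℂ) →ₗ[ℂ]
      ({i // P (hA.eigenvalues i)} ⊕ {i // P (hC.eigenvalues i)} → ℂ) :=
  LinearMap.pi (Sum.elim
    (fun i => LinearMap.proj i.1 ∘ₗ eigenCoord hA ∘ₗ velocity n)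
    (fun i => LinearMap.proj i.1 ∘ₗ eigenCoord hC ∘ₗ position n))

theorem energy_self (hA : A.IsHermitian) (hC : C.IsHermitian) (v : Fin n ⊕ Fin n → ℂ) :
    (energy A C v v).re
      = ∑ i, hA.eigenvalues i * Complex.normSq (eigenCoord hA (velocity n v) i)
        + ∑ i, hC.eigenvalues i * Complex.normSq (eigenCoord hC (position n v) i) := by
  rw [energy_apply, Complex.add_re, cform_self hA, cform_self hC]

theorem selectedCoords_eq_zero {hA : A.IsHermitian} {hC : C.IsHermitian} {P : ℝ → Prop}
    {v : Fin n ⊕ Fin n → ℂ} (h : selectedCoords hA hC P v = 0) :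
    (∀ i, P (hA.eigenvalues i) → eigenCoord hA (velocity n v) i = 0) ∧
    (∀ i, P (hC.eigenvalues i) → eigenCoord hC (position n v) i = 0) :=
  ⟨fun i hi => congrFun h (Sum.inl ⟨i, hi⟩), fun i hi => congrFun h (Sum.inr ⟨i, hi⟩)⟩

/-! ### Upper bounds for the three root counts -/

theorem card_pos_le (hA : A.IsHermitian) (hC : C.IsHermitian) (hAinv : IsUnit A.det)
    (hB : B.PosDef) :
    ((companionEnd A B C).charpoly.roots.filter fun z => 0 < z.re).card
      ≤ inertiaNeg hA + inertiaNeg hC := by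
  rw [card_filter_roots]
  refine (finrank_le_of_dissipative (companionEnd A B C) (energy A C) (star_energy hA hC)
    (fun w => ?_) (companionEnd_eq_zero_of_energy hAinv hC hB) _
    (mapsTo_sup_maxGenEigenspace _ _) (fun μ hμ w hw h =>
      eq_zero_of_mem_sup_maxGenEigenspace _ _ (by simp [hμ]) hw h)
    (selectedCoords hA hC (fun t => t < 0)) (fun w hw => ?_)).trans (le_of_eq ?_)
  · rw [energy_companionEnd hAinv hC]
    simpa using cform_nonneg hB _
  · obtain ⟨h1, h2⟩ := selectedCoords_eq_zero hw
    rw [energy_self hA hC]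
    refine add_nonneg (Finset.sum_nonneg fun i _ => ?_) (Finset.sum_nonneg fun i _ => ?_)
    · rcases lt_or_ge (hA.eigenvalues i) 0 with h | h
      · simp [h1 i h]
      · exact mul_nonneg h (Complex.normSq_nonneg _)
    · rcases lt_or_ge (hC.eigenvalues i) 0 with h | h
      · simp [h2 i h]
      · exact mul_nonneg h (Complex.normSq_nonneg _)
  · rw [Fintype.card_sum, Fintype.card_subtype, Fintype.card_subtype]
    rfl

/-- The bound for the left half-plane is the one for the right half-plane with `T` and `H` replaced
by `-T` and `-H`. -/
theorem card_neg_le (hA : A.IsHermitian) (hC : C.IsHermitian) (hAinv : IsUnit A.det)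
    (hB : B.PosDef) :
    ((companionEnd A B C).charpoly.roots.filter fun z => z.re < 0).card
      ≤ inertiaPos hA + inertiaPos hC := by
  rw [card_filter_roots]
  set W := ((companionEnd A B C).charpoly.roots.toFinset.filter fun z => z.re < 0).sup
    (companionEnd A B C).maxGenEigenspace
  have hinv : ∀ w ∈ W, (-companionEnd A B C) w ∈ W := by
    intro w hw
    rw [LinearMap.neg_apply]
    exact W.neg_mem (mapsTo_sup_maxGenEigenspace _ _ hw)
  have hinj : ∀ μ : ℂ, μ.re ≤ 0 → ∀ w ∈ W, (-companionEnd A B C) w = μ • w → w = 0 := by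
    intro μ hμ w hw h
    refine eq_zero_of_mem_sup_maxGenEigenspace _ _ (μ := -μ) (by simp [hμ]) hw ?_
    rw [neg_smul, ← h, LinearMap.neg_apply, neg_neg]
  have hH : ∀ x y, star ((-energy A C) x y) = (-energy A C) y x := by
    intro x y
    simp only [LinearMap.neg_apply, star_neg, star_energy hA hC]
  have hT : ∀ w, (-energy A C) ((-companionEnd A B C) w) = energy A C (companionEnd A B C w) := by
    intro w
    simp only [LinearMap.neg_apply, map_neg, neg_neg]
  have hHT : ∀ v w, (-energy A C) v ((-companionEnd A B C) w)
      = energy A C v (companionEnd A B C w) := by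
    intro v w
    simp only [LinearMap.neg_apply, map_neg, neg_neg]
  have hd : ∀ w, ((-energy A C) w ((-companionEnd A B C) w)).re ≤ 0 := by
    intro w
    rw [hHT, energy_companionEnd hAinv hC]
    simpa using cform_nonneg hB _
  have hobs : ∀ w, ((-energy A C) w ((-companionEnd A B C) w)).re = 0 →
      ((-energy A C) ((-companionEnd A B C) w)
        ((-companionEnd A B C) ((-companionEnd A B C) w))).re = 0 →
      (-companionEnd A B C) w = 0 := by
    intro w h1 h2
    rw [hHT] at h1
    rw [hT, LinearMap.neg_apply, LinearMap.neg_apply, map_neg, map_neg, map_neg, neg_neg] at h2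
    rw [LinearMap.neg_apply, companionEnd_eq_zero_of_energy hAinv hC hB w h1 h2, neg_zero]
  have hφ : ∀ w, selectedCoords hA hC (fun t => 0 < t) w = 0 → 0 ≤ ((-energy A C) w w).re := by
    intro w hw
    obtain ⟨h1, h2⟩ := selectedCoords_eq_zero hw
    rw [LinearMap.neg_apply, LinearMap.neg_apply, Complex.neg_re, energy_self hA hC, neg_nonneg]
    refine add_nonpos (Finset.sum_nonpos fun i _ => ?_) (Finset.sum_nonpos fun i _ => ?_)
    · rcases lt_or_ge 0 (hA.eigenvalues i) with h | h
      · simp [h1 i h]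
      · exact mul_nonpos_of_nonpos_of_nonneg h (Complex.normSq_nonneg _)
    · rcases lt_or_ge 0 (hC.eigenvalues i) with h | h
      · simp [h2 i h]
      · exact mul_nonpos_of_nonpos_of_nonneg h (Complex.normSq_nonneg _)
  refine (finrank_le_of_dissipative (-companionEnd A B C) (-energy A C) hH hd hobs W hinv hinj
    (selectedCoords hA hC (fun t => 0 < t)) hφ).trans (le_of_eq ?_)
  rw [Fintype.card_sum, Fintype.card_subtype, Fintype.card_subtype]
  rfl

theorem maxGenEigenspace_zero_le_ker (hAinv : IsUnit A.det) (hC : C.IsHermitian) (hB : B.PosDef) :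
    (companionEnd A B C).maxGenEigenspace 0 ≤ LinearMap.ker (companionEnd A B C) := by
  intro w hw
  obtain ⟨k, hk⟩ := Module.End.mem_maxGenEigenspace _ _ _ |>.mp hw
  rw [zero_smul, sub_zero] at hk
  induction k with
  | zero => simp at hk; simp [hk]
  | succ k ih =>
    -- `T² (T ^ k w) = 0` implies `T (T ^ k w) = 0`, so the exponent can be lowered down to `1`.
    rcases k with _ | k
    · simpa using hk
    · apply ih
      rw [pow_succ', Module.End.mul_apply] at hk ⊢
      rw [pow_succ', Module.End.mul_apply] at hk
      exact companionEnd_eq_zero_of_sq hAinv hC hB _ hk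

/-- An eigenvector for a purely imaginary eigenvalue does not dissipate energy, so by observability
the eigenvalue is `0`. -/
theorem eq_zero_of_re_eq_zero (hA : A.IsHermitian) (hC : C.IsHermitian) (hAinv : IsUnit A.det)
    (hB : B.PosDef) {μ : ℂ} (hμ : μ ∈ (companionEnd A B C).charpoly.roots) (hre : μ.re = 0) :
    μ = 0 := by
  have hev : (companionEnd A B C).HasEigenvalue μ :=
    Module.End.hasEigenvalue_iff_isRoot_charpoly _ _ |>.mpr (Polynomial.isRoot_of_mem_roots hμ)
  obtain ⟨w, hw⟩ := hev.exists_hasEigenvector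
  have hTw := hw.apply_eq_smul
  have him := form_self_im (energy A C) (star_energy hA hC) w
  have h0 : companionEnd A B C w = 0 := by
    refine companionEnd_eq_zero_of_energy hAinv hC hB w ?_ ?_
    · rw [hTw]; simp [hre, him]
    · simp only [hTw, map_smul]; simp [hre, him]
  rw [hTw] at h0
  exact (smul_eq_zero.mp h0).resolve_right hw.2

/-- The imaginary-axis part of the spectrum is carried by `ker T = {(0, x) | C x = 0}`, whose
dimension is at most `n₀(C)`. -/
theorem card_zero_le (hA : A.IsHermitian) (hC : C.IsHermitian) (hAinv : IsUnit A.det)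
    (hB : B.PosDef) :
    ((companionEnd A B C).charpoly.roots.filter fun z => z.re = 0).card ≤ inertiaZero hC := by
  rw [card_filter_roots]
  have hle : ((companionEnd A B C).charpoly.roots.toFinset.filter fun z => z.re = 0).sup
      (companionEnd A B C).maxGenEigenspace ≤ LinearMap.ker (companionEnd A B C) := by
    refine Finset.sup_le fun μ hμ => ?_
    rw [Finset.mem_filter, Multiset.mem_toFinset] at hμ
    rw [eq_zero_of_re_eq_zero hA hC hAinv hB hμ.1 hμ.2]
    exact maxGenEigenspace_zero_le_ker hAinv hC hB
  refine (Submodule.finrank_mono hle).trans ?_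
  let φ : (Fin n ⊕ Fin n → ℂ) →ₗ[ℂ] ({i // hC.eigenvalues i = 0} → ℂ) :=
    LinearMap.pi fun i => LinearMap.proj i.1 ∘ₗ eigenCoord hC ∘ₗ position n
  have hinj : Function.Injective (φ ∘ₗ (LinearMap.ker (companionEnd A B C)).subtype) := by
    rw [injective_iff_map_eq_zero]
    rintro ⟨w, hw⟩ h
    have hw : companionEnd A B C w = 0 := hw
    have hy : velocity n w = 0 := by rw [← position_companionEnd, hw, map_zero]
    have hx : C.map Complex.ofReal *ᵥ position n w = 0 := by
      have := mulVec_velocity_companionEnd (B := B) (C := C) hAinv w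
      rw [hw, hy] at this
      simpa using this.symm
    refine Subtype.ext (ext_velocity_position hy (eigenCoord_injective hC ?_))
    funext i
    by_cases hi : hC.eigenvalues i = 0
    · exact congrFun h ⟨i, hi⟩
    · have := eigenCoord_mulVec hC (position n w) i
      rw [hx] at this
      simpa [hi] using this
  have := LinearMap.finrank_le_finrank_of_injective hinj
  rw [Module.finrank_pi, Fintype.card_subtype] at this
  exact this

theorem inertia_sum {M : Matrix (Fin n) (Fin n) ℝ} (hM : M.IsHermitian) :
    inertiaPos hM + inertiaNeg hM + inertiaZero hM = n := by
  unfold inertiaPos inertiaNeg inertiaZero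
  simp only [Finset.card_filter, ← Finset.sum_add_distrib]
  trans ∑ _i : Fin n, 1
  · refine Finset.sum_congr rfl fun i _ => ?_
    rcases lt_trichotomy (hM.eigenvalues i) 0 with h | h | h
    · simp [h, h.ne, h.le]
    · simp [h]
    · simp [h, h.ne', h.le]
  · simp

theorem inertiaZero_eq_zero (hA : A.IsHermitian) (hAinv : IsUnit A.det) : inertiaZero hA = 0 := by
  unfold inertiaZero
  rw [Finset.card_eq_zero, Finset.filter_eq_empty_iff]
  intro i _ h
  have hd := hA.det_eq_prod_eigenvalues
  rw [Finset.prod_eq_zero (Finset.mem_univ i) (by simp [h])] at hd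
  exact hAinv.ne_zero hd

theorem card_filter_re (s : Multiset ℂ) :
    (s.filter fun z => 0 < z.re).card + (s.filter fun z => z.re < 0).card
      + (s.filter fun z => z.re = 0).card = s.card := by
  induction s using Multiset.induction_on with
  | empty => simp
  | cons a s ih =>
    rw [Multiset.card_cons, ← ih]
    rcases lt_trichotomy a.re 0 with h | h | h
    · simp [h, h.ne, h.le, not_lt.mpr]; ring
    · simp [h]; ring
    · simp [h, h.ne', h.le, not_lt.mpr]; ring
end

/-! ### The root count -/

/-- root-counting for the quadratic matrix polynomial `Z(λ) = A·λ² + B·λ + C`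
with `A, C` symmetric, `A` nonsingular and `B` symmetric positive definite: counting the
complex roots of `p(λ) = det Z(λ)` with multiplicity, the number of roots with positive
(resp. negative, zero) real part is `n₋(A) + n₋(C)` (resp. `n₊(A) + n₊(C)`, `n₀(C)`), and
`p` has degree `2n`. -/
theorem stmt_3 {n : ℕ} (A B C : Matrix (Fin n) (Fin n) ℝ)
    (hA : A.IsHermitian) (hC : C.IsHermitian) (hAinv : IsUnit A.det) (hB : B.PosDef)
    (p : ℝ[X])
    (hp : p = Matrix.det ((X : ℝ[X]) ^ 2 • A.map Polynomial.C
      + (X : ℝ[X]) • B.map Polynomial.C + C.map Polynomial.C)) :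
    p.natDegree = 2 * n ∧
    ((p.map (algebraMap ℝ ℂ)).roots.filter fun z => 0 < z.re).card
        = inertiaNeg hA + inertiaNeg hC ∧
    ((p.map (algebraMap ℝ ℂ)).roots.filter fun z => z.re < 0).card
        = inertiaPos hA + inertiaPos hC ∧
    ((p.map (algebraMap ℝ ℂ)).roots.filter fun z => z.re = 0).card
        = inertiaZero hC ∧
    ((p.map (algebraMap ℝ ℂ)).roots.filter fun z => 0 < z.re).card
      + ((p.map (algebraMap ℝ ℂ)).roots.filter fun z => z.re < 0).card
      + ((p.map (algebraMap ℝ ℂ)).roots.filter fun z => z.re = 0).card = 2 * n := by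
  have hfact : p = Polynomial.C A.det * (companion A B C).charpoly :=
    hp.trans (det_quadratic A B C hAinv)
  have hdeg : p.natDegree = 2 * n := by
    rw [hfact, Polynomial.natDegree_C_mul hAinv.ne_zero, Matrix.charpoly_natDegree_eq_dim]
    simp [two_mul]
  have hroots : (p.map (algebraMap ℝ ℂ)).roots = (companionEnd A B C).charpoly.roots := by
    have hdet : algebraMap ℝ ℂ A.det ≠ 0 := by simpa using hAinv.ne_zero
    rw [hfact, Polynomial.map_mul, Polynomial.map_C, Polynomial.roots_C_mul _ hdet, companionEnd,
      Matrix.charpoly_toLin', ← Matrix.charpoly_map]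
    rfl
  have hcard : (companionEnd A B C).charpoly.roots.card = 2 * n := by
    rw [← hroots, IsAlgClosed.card_roots_eq_natDegree, Polynomial.natDegree_map, hdeg]
  rw [hroots]
  have hsum := card_filter_re (companionEnd A B C).charpoly.roots
  have h1 := card_pos_le hA hC hAinv hB
  have h2 := card_neg_le hA hC hAinv hB
  have h3 := card_zero_le hA hC hAinv hB
  have h4 := inertia_sum hA
  have h5 := inertia_sum hC
  have h6 := inertiaZero_eq_zero hA hAinv
  -- The three counts and their three upper bounds both sum to `2 * n`.
  refine ⟨hdeg, ?_, ?_, ?_, ?_⟩ <;> omega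
end

section
/- Let Δ ∈ ℝ^{n×n} be a diagonal matrix with nonnegative diagonal entries d₁, …, dₙ, let α > 0, and suppose x̃, w̃ : ℝ → (Fin n → ℝ) are differentiable functions satisfying x̃'(t) = −Δ·x̃(t) − w̃(t) and w̃'(t) = α·x̃(t) for all t ≥ 0. Then the energy function E(t) = (1/2)‖x̃(t)‖² + (1/(2α))‖w̃(t)‖² is differentiable with E'(t) = −∑_{i=1}^{n} d_i·x̃_i(t)² ≤ 0 for all t ≥ 0; in particular, E is nonincreasing on [0, ∞). -/
/-! Along the dynamics `E' = ∑ x̃ᵢ x̃ᵢ' + α⁻¹ ∑ w̃ᵢ w̃ᵢ'`. The skew coupling contributes `-x̃ᵢ w̃ᵢ` to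
the first sum and `+x̃ᵢ w̃ᵢ` to the second, so only the dissipation `-∑ dᵢ x̃ᵢ²` survives; a
nonpositive derivative on `[0, ∞)` then makes `E` antitone there. -/

open Matrix

/-- the energy function `E(t) = (1/2)‖x̃(t)‖² + (1/(2α))‖w̃(t)‖²` along the error
dynamics `x̃' = −Δ·x̃ − w̃`, `w̃' = α·x̃` (with `Δ = diag(d)`, `d ≥ 0`) has derivative
`E'(t) = −∑ᵢ dᵢ·x̃ᵢ(t)² ≤ 0` for all `t ≥ 0`; in particular `E` is nonincreasing on `[0,∞)`. -/
theorem stmt_4 {n : ℕ} (d : Fin n → ℝ) (hd : ∀ i, 0 ≤ d i) (α : ℝ) (hα : 0 < α)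
    (xtil wtil : ℝ → (Fin n → ℝ))
    (hxtil : ∀ t ≥ (0 : ℝ), HasDerivAt xtil
      (-(Matrix.diagonal d).mulVec (xtil t) - wtil t) t)
    (hwtil : ∀ t ≥ (0 : ℝ), HasDerivAt wtil (α • xtil t) t)
    (E : ℝ → ℝ)
    (hE : E = fun t => (1 / 2) * ∑ i, (xtil t i) ^ 2
      + (1 / (2 * α)) * ∑ i, (wtil t i) ^ 2) :
    (∀ t ≥ (0 : ℝ), HasDerivAt E (-(∑ i, d i * (xtil t i) ^ 2)) t
      ∧ -(∑ i, d i * (xtil t i) ^ 2) ≤ 0) ∧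
    AntitoneOn E (Set.Ici 0) := by
  -- The chain rule is applied coordinatewise, and the sums are then compared term by term.
  have hderiv : ∀ t ≥ (0 : ℝ), HasDerivAt E (-(∑ i, d i * (xtil t i) ^ 2)) t := by
    intro t ht
    have hx := hasDerivAt_pi.1 (hxtil t ht)
    have hw := hasDerivAt_pi.1 (hwtil t ht)
    have h := ((HasDerivAt.fun_sum (u := Finset.univ) fun i _ => (hx i).fun_pow 2).const_mul
      (1 / 2 : ℝ)).fun_add ((HasDerivAt.fun_sum (u := Finset.univ) fun i _ =>
      (hw i).fun_pow 2).const_mul (1 / (2 * α)))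
    rw [hE]
    refine h.congr_deriv ?_
    rw [Finset.mul_sum, Finset.mul_sum, ← Finset.sum_add_distrib, ← Finset.sum_neg_distrib]
    refine Finset.sum_congr rfl fun i _ => ?_
    simp only [Pi.sub_apply, Pi.neg_apply, Pi.smul_apply, smul_eq_mul, Matrix.mulVec_diagonal]
    field_simp
    ring
  have hnonpos : ∀ t, -(∑ i, d i * (xtil t i) ^ 2) ≤ 0 := fun t =>
    neg_nonpos.2 (Finset.sum_nonneg fun i _ => mul_nonneg (hd i) (sq_nonneg _))
  refine ⟨fun t ht => ⟨hderiv t ht, hnonpos t⟩, ?_⟩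
  refine antitoneOn_of_hasDerivWithinAt_nonpos (convex_Ici 0)
    (fun t ht => (hderiv t ht).continuousAt.continuousWithinAt)
    (fun t ht => (hderiv t (interior_subset ht)).hasDerivWithinAt) fun t _ => hnonpos t
end

section
/- Let Δ ∈ ℝ^{n×n} be a diagonal matrix with nonnegative diagonal entries, let α > 0, and suppose x̃, w̃ : ℝ → (Fin n → ℝ) are differentiable functions satisfying x̃'(t) = −Δ·x̃(t) − w̃(t) and w̃'(t) = α·x̃(t) for all t ≥ 0. Then for all t ≥ 0, ‖x̃(t)‖² ≤ ‖x̃(0)‖² + ‖w̃(0)‖²/α. In particular, if x̃(0) = 0, then ‖x̃(t)‖ ≤ ‖w̃(0)‖/√α for all t ≥ 0. -/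
open Matrix

/-!
The energy `V(t) = ‖x̃(t)‖² + ‖w̃(t)‖²/α` is a Lyapunov function: the cross terms `∓2 x̃ᵢ w̃ᵢ` cancel
in its derivative, leaving `V' = -2 ∑ dᵢ x̃ᵢ² ≤ 0`. As `Δ` is diagonal, the coordinates decouple, so
the decay is proved for each pair `(x̃ᵢ, w̃ᵢ)` and then summed.
-/

/-- Energy decay for one coordinate pair of the error dynamics. -/
theorem scalar_energy_le {d α : ℝ} (hd : 0 ≤ d) (hα : 0 < α) {x w : ℝ → ℝ}
    (hx : ∀ t ≥ (0 : ℝ), HasDerivAt x (-(d * x t) - w t) t)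
    (hw : ∀ t ≥ (0 : ℝ), HasDerivAt w (α * x t) t) {t : ℝ} (ht : 0 ≤ t) :
    x t ^ 2 + w t ^ 2 / α ≤ x 0 ^ 2 + w 0 ^ 2 / α := by
  have hV : ∀ s ≥ (0 : ℝ),
      HasDerivAt (fun s => x s ^ 2 + w s ^ 2 / α) (-(2 * d * x s ^ 2)) s := by
    intro s hs
    refine (((hx s hs).fun_pow 2).fun_add (((hw s hs).fun_pow 2).div_const α)).congr_deriv ?_
    field_simp
    ring
  have hanti : AntitoneOn (fun s => x s ^ 2 + w s ^ 2 / α) (Set.Ici 0) := by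
    refine antitoneOn_of_hasDerivWithinAt_nonpos (f' := fun s => -(2 * d * x s ^ 2))
      (convex_Ici 0) (fun s hs => (hV s hs).continuousAt.continuousWithinAt)
      (fun s hs => (hV s (interior_subset hs)).hasDerivWithinAt) (fun s _ => ?_)
    have : 0 ≤ 2 * d * x s ^ 2 := by positivity
    linarith
  exact hanti Set.self_mem_Ici ht ht

/-- along the error dynamics `x̃' = −Δ·x̃ − w̃`, `w̃' = α·x̃` with `Δ` diagonal
with nonnegative entries and `α > 0`, one has `‖x̃(t)‖² ≤ ‖x̃(0)‖² + ‖w̃(0)‖²/α` for all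
`t ≥ 0`; in particular, if `x̃(0) = 0` then `‖x̃(t)‖ ≤ ‖w̃(0)‖/√α` for all `t ≥ 0`. -/
theorem stmt_5 {n : ℕ} (d : Fin n → ℝ) (hd : ∀ i, 0 ≤ d i) (α : ℝ) (hα : 0 < α)
    (xtil wtil : ℝ → (Fin n → ℝ))
    (hxtil : ∀ t ≥ (0 : ℝ), HasDerivAt xtil
      (-(Matrix.diagonal d).mulVec (xtil t) - wtil t) t)
    (hwtil : ∀ t ≥ (0 : ℝ), HasDerivAt wtil (α • xtil t) t) :
    (∀ t ≥ (0 : ℝ), ∑ i, (xtil t i) ^ 2 ≤ ∑ i, (xtil 0 i) ^ 2 + (∑ i, (wtil 0 i) ^ 2) / α) ∧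
    (xtil 0 = 0 → ∀ t ≥ (0 : ℝ),
      Real.sqrt (∑ i, (xtil t i) ^ 2) ≤ Real.sqrt (∑ i, (wtil 0 i) ^ 2) / Real.sqrt α) := by
  have key : ∀ t ≥ (0 : ℝ),
      ∑ i, (xtil t i) ^ 2 ≤ ∑ i, (xtil 0 i) ^ 2 + (∑ i, (wtil 0 i) ^ 2) / α := by
    intro t ht
    rw [Finset.sum_div, ← Finset.sum_add_distrib]
    refine Finset.sum_le_sum fun i _ => ?_
    have h := scalar_energy_le (x := fun s => xtil s i) (w := fun s => wtil s i) (hd i) hα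
      (fun s hs => by simpa [Matrix.mulVec_diagonal] using hasDerivAt_pi.1 (hxtil s hs) i)
      (fun s hs => by simpa using hasDerivAt_pi.1 (hwtil s hs) i) ht
    have : 0 ≤ wtil t i ^ 2 / α := by positivity
    linarith
  refine ⟨key, fun h0 t ht => ?_⟩
  rw [← Real.sqrt_div' _ hα.le]
  exact Real.sqrt_le_sqrt (by simpa [h0] using key t ht)
end

section
/- Let n ≥ 2, let G be a connected simple graph on vertex set Fin n with Laplacian matrix L(G), degree matrix Δ(G), and adjacency matrix A(G), let α > 0, and let w ∈ ℝⁿ be a constant disturbance vector. Suppose x, x̂, ŵ : ℝ → (Fin n → ℝ) are differentiable functions satisfying, for all t ≥ 0, the closed-loop equations x'(t) = −L(G)·x(t) − ŵ(t) + w (each agent applies the modified consensus protocol u_i = −∑_{j∼i}(x_i − x_j) − ŵ_i and is subject to the disturbance w_i), ŵ'(t) = α·(x(t) − x̂(t)), and x̂'(t) = −Δ(G)·x̂(t) + A(G)·x(t). Then the networked multiagent system achieves consensus despite the disturbances and the disturbance estimates converge to the true disturbances: for all i, j, x_i(t) − x_j(t) → 0 and ŵ_i(t) → w_i as t → ∞.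 -/
/-!
Put `e = x - xhat` and `ω = what - w`. The coupling terms cancel, since `L(G) = Δ(G) - A(G)`, and
each agent is left with the planar linear system `e' = -d e - ω`, `ω' = α e`, where its degree `d`
is positive by connectedness. The strict Lyapunov function `α e² + ω² + 2 c e ω`, with
`c = α d / (2 α + d²)`, shows that `ω → 0` (`planar_tendsto_zero`).

The state then obeys `x' = -L x - ω` with a vanishing input. For `V = xᵀ L x`, Young's inequality
gives `V' ≤ -|L x|² + |ω|²`, and `xᵀ L x ≤ C |L x|²` because `L` is symmetric
(`exists_dotProduct_mulVec_le`). The comparison lemma `tendsto_zero_of_deriv_le` yields `V → 0`, so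
`x i - x j → 0` along every edge and, by connectedness, for every pair.
-/

open Matrix Filter

/-- Comparison principle: a nonnegative solution of `V' ≤ -k V + g` with `k > 0` and vanishing
input `g` tends to zero. -/
lemma tendsto_zero_of_deriv_le {V V' g : ℝ → ℝ} {k : ℝ} (hk : 0 < k)
    (hV : ∀ t ≥ (0 : ℝ), HasDerivAt V (V' t) t) (h0 : ∀ t, 0 ≤ V t)
    (hle : ∀ t ≥ (0 : ℝ), V' t ≤ -k * V t + g t) (hg : Tendsto g atTop (nhds 0)) :
    Tendsto V atTop (nhds 0) := by
  rw [Metric.tendsto_atTop]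
  intro ε hε
  obtain ⟨T, hT⟩ := Filter.eventually_atTop.1
    ((hg.eventually_lt_const (show 0 < k * (ε / 2) by positivity)).and (eventually_ge_atTop 0))
  have hT0 : 0 ≤ T := (hT T le_rfl).2
  have hd : ∀ t ≥ T, HasDerivAt (fun s => (V s - ε / 2) * Real.exp (k * s))
      (V' t * Real.exp (k * t) + (V t - ε / 2) * (Real.exp (k * t) * k)) t := by
    intro t ht
    have h1 := (hV t (hT0.trans ht)).sub_const (ε / 2)
    have h2 : HasDerivAt (fun s => Real.exp (k * s)) (Real.exp (k * t) * k) t := by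
      simpa using ((hasDerivAt_id t).const_mul k).exp
    exact h1.mul h2
  have hanti : AntitoneOn (fun s => (V s - ε / 2) * Real.exp (k * s)) (Set.Ici T) := by
    apply antitoneOn_of_deriv_nonpos (convex_Ici T)
    · exact fun t ht => (hd t ht).continuousAt.continuousWithinAt
    · intro t ht
      rw [interior_Ici] at ht
      exact (hd t (le_of_lt ht)).differentiableAt.differentiableWithinAt
    · intro t ht
      rw [interior_Ici] at ht
      have ht' : T ≤ t := le_of_lt ht
      rw [(hd t ht').deriv]
      have h1 := hle t (hT0.trans ht')
      have h2 := (hT t ht').1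
      have h3 : V' t + (V t - ε / 2) * k ≤ 0 := by linarith
      nlinarith [Real.exp_pos (k * t)]
  have hlim : Tendsto (fun t => ((V T - ε / 2) * Real.exp (k * T)) * Real.exp (-(k * t)))
      atTop (nhds 0) := by
    have : Tendsto (fun t => Real.exp (-(k * t))) atTop (nhds 0) :=
      Real.tendsto_exp_neg_atTop_nhds_zero.comp (tendsto_id.const_mul_atTop hk)
    simpa using this.const_mul ((V T - ε / 2) * Real.exp (k * T))
  obtain ⟨S, hS⟩ := Filter.eventually_atTop.1
    ((hlim.eventually_lt_const (show 0 < ε / 2 by positivity)).and (eventually_ge_atTop T))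
  refine ⟨S, fun t ht => ?_⟩
  obtain ⟨h1, h2⟩ := hS t ht
  have h3 := hanti (Set.mem_Ici.2 le_rfl) (Set.mem_Ici.2 h2) h2
  simp only at h3
  have h4 : V t - ε / 2 ≤ ((V T - ε / 2) * Real.exp (k * T)) * Real.exp (-(k * t)) := by
    have := mul_le_mul_of_nonneg_right h3 (Real.exp_pos (-(k * t))).le
    rwa [mul_assoc, ← Real.exp_add, add_neg_cancel, Real.exp_zero, mul_one] at this
  rw [Real.dist_eq, sub_zero, abs_of_nonneg (h0 t)]
  linarith

/-- The damped oscillator `e' = -d e - ω`, `ω' = α e` is asymptotically stable. -/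
lemma planar_tendsto_zero {e ω : ℝ → ℝ} {α d : ℝ} (hα : 0 < α) (hd : 0 < d)
    (he : ∀ t ≥ (0 : ℝ), HasDerivAt e (-d * e t - ω t) t)
    (hω : ∀ t ≥ (0 : ℝ), HasDerivAt ω (α * e t) t) :
    Tendsto ω atTop (nhds 0) := by
  obtain ⟨c, hc⟩ : ∃ c, c = α * d / (2 * α + d ^ 2) := ⟨_, rfl⟩
  have hD : 0 < 2 * α + d ^ 2 := by positivity
  have hc0 : 0 < c := by rw [hc]; positivity
  have hcD : c * (2 * α + d ^ 2) = α * d := by rw [hc]; field_simp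
  have hcd : c ≤ d := by
    rw [hc, div_le_iff₀ hD]
    nlinarith [mul_pos hα hd, pow_pos hd 3]
  have hcα : 4 * c ^ 2 ≤ α := by
    have h1 : c ^ 2 * (2 * α + d ^ 2) ^ 2 = α ^ 2 * d ^ 2 := by rw [← mul_pow, hcD, mul_pow]
    have h2 : 4 * (α ^ 2 * d ^ 2) ≤ α * (2 * α + d ^ 2) ^ 2 := by
      have : 0 ≤ α * (4 * α ^ 2 + d ^ 4) := by positivity
      nlinarith
    rw [← h1] at h2
    have h3 : 0 < (2 * α + d ^ 2) ^ 2 := by positivity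
    nlinarith
  -- The cross term is at most half of the energy.
  have hcross : ∀ a b : ℝ, |2 * c * a * b| ≤ (α * a ^ 2 + b ^ 2) / 2 := by
    intro a b
    rw [abs_le]
    constructor <;>
    nlinarith [sq_nonneg (2 * c * a + b), sq_nonneg (2 * c * a - b),
      mul_le_mul_of_nonneg_right hcα (sq_nonneg a)]
  have hlow : ∀ t, (α * e t ^ 2 + ω t ^ 2) / 2 ≤ α * e t ^ 2 + ω t ^ 2 + 2 * c * e t * ω t :=
    fun t => by linarith [(abs_le.1 (hcross (e t) (ω t))).1]
  have hW : Tendsto (fun t => α * e t ^ 2 + ω t ^ 2 + 2 * c * e t * ω t) atTop (nhds 0) := by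
    refine tendsto_zero_of_deriv_le (k := 2 / 3 * c) (g := fun _ => 0)
      (V' := fun t => α * (2 * e t * (-d * e t - ω t)) + 2 * ω t * (α * e t)
        + (2 * c * (-d * e t - ω t) * ω t + 2 * c * e t * (α * e t)))
      (by positivity) ?_ ?_ ?_ tendsto_const_nhds
    · intro t ht
      have h1 := ((he t ht).pow 2).const_mul α
      have h2 := (hω t ht).pow 2
      have h3 := ((he t ht).const_mul (2 * c)).mul (hω t ht)
      refine HasDerivAt.congr_deriv ((h1.add h2).add h3) ?_
      simp
    · intro t
      refine le_trans ?_ (hlow t)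
      positivity
    · intro t _
      have h1 := (abs_le.1 (hcross (e t) (ω t))).2
      have h2 : 0 ≤ c * (d * e t + ω t) ^ 2 := by positivity
      have h3 : c * (2 * α + d ^ 2) * e t ^ 2 = α * d * e t ^ 2 := by rw [hcD]
      have h4 : c * (α * e t ^ 2) ≤ d * (α * e t ^ 2) :=
        mul_le_mul_of_nonneg_right hcd (by positivity)
      have h5 := mul_le_mul_of_nonneg_left h1 hc0.le
      nlinarith
  have hsq : Tendsto (fun t => ω t ^ 2) atTop (nhds 0) := by
    refine squeeze_zero (fun t => sq_nonneg _) (fun t => ?_) (by simpa using hW.const_mul 2)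
    have := hlow t
    have h2 : 0 ≤ α * e t ^ 2 := by positivity
    linarith
  rw [tendsto_zero_iff_abs_tendsto_zero]
  simpa [Real.sqrt_sq_eq_abs, Function.comp_def] using hsq.sqrt

/-- A symmetric matrix satisfies `xᵀ L x ≤ C |L x|²`: with a generalized inverse `M`, so that
`L M L = L`, the left side is the quadratic form of `M` at `L x`. -/
lemma exists_dotProduct_mulVec_le {n : ℕ} (L : Matrix (Fin n) (Fin n) ℝ) (hL : L.IsSymm) :
    ∃ C : ℝ, 0 < C ∧ ∀ v, v ⬝ᵥ L *ᵥ v ≤ C * (L *ᵥ v ⬝ᵥ L *ᵥ v) := by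
  obtain ⟨s, hs⟩ := (Matrix.toLin' L).rangeRestrict.exists_rightInverse_of_surjective
    (LinearMap.range_rangeRestrict _)
  obtain ⟨M, hM⟩ := LinearMap.exists_extend s
  obtain ⟨N, rfl⟩ := (Matrix.toLin' (R := ℝ) (m := Fin n) (n := Fin n)).surjective M
  have hinv : ∀ v, L *ᵥ (N *ᵥ (L *ᵥ v)) = L *ᵥ v := by
    intro v
    have h1 := LinearMap.congr_fun hM ((Matrix.toLin' L).rangeRestrict v)
    have h2 := LinearMap.congr_fun hs ((Matrix.toLin' L).rangeRestrict v)
    have h3 := congrArg Subtype.val h2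
    simp only [LinearMap.comp_apply, Submodule.subtype_apply, LinearMap.codRestrict_apply,
      LinearMap.rangeRestrict, Matrix.toLin'_apply, LinearMap.id_apply] at h1 h3
    rw [h1]
    exact h3
  refine ⟨∑ i, ∑ j, |N i j| + 1, by positivity, fun v => ?_⟩
  have hsymm : ∀ a b : Fin n → ℝ, a ⬝ᵥ L *ᵥ b = L *ᵥ a ⬝ᵥ b := by
    intro a b
    rw [dotProduct_mulVec, ← mulVec_transpose, hL.eq]
  rw [← hinv v, hsymm, hinv v]
  generalize L *ᵥ v = y
  have hle : ∀ i, y i ^ 2 ≤ y ⬝ᵥ y := by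
    intro i
    rw [dotProduct, sq]
    exact Finset.single_le_sum (f := fun i => y i * y i) (fun j _ => mul_self_nonneg _)
      (Finset.mem_univ i)
  have hyy : 0 ≤ y ⬝ᵥ y := Finset.sum_nonneg fun j _ => mul_self_nonneg _
  have hN : y ⬝ᵥ N *ᵥ y ≤ (∑ i, ∑ j, |N i j|) * (y ⬝ᵥ y) := by
    have hexp : y ⬝ᵥ N *ᵥ y = ∑ i, ∑ j, y i * (N i j * y j) := by
      simp only [dotProduct, mulVec, Finset.mul_sum]
    rw [hexp, Finset.sum_mul]
    refine Finset.sum_le_sum fun i _ => ?_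
    rw [Finset.sum_mul]
    refine Finset.sum_le_sum fun j _ => ?_
    calc y i * (N i j * y j) ≤ |y i * (N i j * y j)| := le_abs_self _
        _ = |N i j| * (|y i| * |y j|) := by rw [abs_mul, abs_mul]; ring
        _ ≤ _ := by
          refine mul_le_mul_of_nonneg_left ?_ (abs_nonneg _)
          have h1 := hle i
          have h2 := hle j
          nlinarith [sq_nonneg (|y i| - |y j|), sq_abs (y i), sq_abs (y j)]
  linarith

theorem stmt_6 {n : ℕ} (hn : 2 ≤ n) (G : SimpleGraph (Fin n)) [DecidableRel G.Adj]
    (hG : G.Connected) (α : ℝ) (hα : 0 < α) (w : Fin n → ℝ)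
    (x xhat what : ℝ → (Fin n → ℝ))
    (hx : ∀ t ≥ (0 : ℝ), HasDerivAt x
      (-(G.lapMatrix ℝ).mulVec (x t) - what t + w) t)
    (hwhat : ∀ t ≥ (0 : ℝ), HasDerivAt what (α • (x t - xhat t)) t)
    (hxhat : ∀ t ≥ (0 : ℝ), HasDerivAt xhat
      (-(Matrix.diagonal (fun i => (G.degree i : ℝ))).mulVec (xhat t)
        + (G.adjMatrix ℝ).mulVec (x t)) t) :
    (∀ i j, Tendsto (fun t => x t i - x t j) atTop (nhds 0)) ∧
    (∀ i, Tendsto (fun t => what t i) atTop (nhds (w i))) := by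
  have : Nontrivial (Fin n) := Fin.nontrivial_iff_two_le.2 hn
  have hω : ∀ i, Tendsto (fun t => what t i - w i) atTop (nhds 0) := by
    intro i
    have hd : (0 : ℝ) < G.degree i := by
      exact_mod_cast hG.preconnected.degree_pos_of_nontrivial i
    refine planar_tendsto_zero (e := fun t => x t i - xhat t i) hα hd ?_ ?_
    · intro t ht
      refine HasDerivAt.congr_deriv
        ((hasDerivAt_pi.1 (hx t ht) i).sub (hasDerivAt_pi.1 (hxhat t ht) i)) ?_
      simp only [SimpleGraph.lapMatrix, SimpleGraph.degMatrix, sub_mulVec, Pi.add_apply,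
        Pi.sub_apply, Pi.neg_apply, mulVec_diagonal]
      ring
    · intro t ht
      exact (hasDerivAt_pi.1 (hwhat t ht) i).sub_const (w i)
  refine ⟨?_, fun i => by simpa using (hω i).add_const (w i)⟩
  set L := G.lapMatrix ℝ with hLdef
  have hL : L.IsSymm := SimpleGraph.isSymm_lapMatrix (R := ℝ) G
  obtain ⟨C, hC, hCL⟩ := exists_dotProduct_mulVec_le L hL
  have hquad : ∀ v : Fin n → ℝ,
      v ⬝ᵥ L *ᵥ v = (∑ i, ∑ j, if G.Adj i j then (v i - v j) ^ 2 else 0) / 2 := by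
    intro v
    rw [← SimpleGraph.lapMatrix_toLinearMap₂' ℝ G v, toLinearMap₂'_apply']
  have hterm : ∀ (v : Fin n → ℝ) (i j : Fin n),
      0 ≤ (if G.Adj i j then (v i - v j) ^ 2 else 0 : ℝ) := by
    intro v i j
    split_ifs <;> positivity
  have hV : Tendsto (fun t => x t ⬝ᵥ L *ᵥ x t) atTop (nhds 0) := by
    refine tendsto_zero_of_deriv_le (k := C⁻¹) (g := fun t => ∑ i, (what t i - w i) ^ 2)
      (V' := fun t => 2 * (L *ᵥ x t ⬝ᵥ (-(L *ᵥ x t) - what t + w)))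
      (by positivity) ?_ ?_ ?_ ?_
    · intro t ht
      have h1 := hx t ht
      have h2 : HasDerivAt (fun t => L *ᵥ x t) (L *ᵥ (-(L *ᵥ x t) - what t + w)) t :=
        (LinearMap.toContinuousLinearMap (Matrix.toLin' L)).hasFDerivAt.comp_hasDerivAt t h1
      have h3 : HasDerivAt (fun t => ∑ i, x t i * (L *ᵥ x t) i)
          (∑ i, ((-(L *ᵥ x t) - what t + w) i * (L *ᵥ x t) i
            + x t i * (L *ᵥ (-(L *ᵥ x t) - what t + w)) i)) t :=
        HasDerivAt.fun_sum fun i _ => (hasDerivAt_pi.1 h1 i).fun_mul (hasDerivAt_pi.1 h2 i)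
      have h4 : x t ⬝ᵥ L *ᵥ (-(L *ᵥ x t) - what t + w)
          = L *ᵥ x t ⬝ᵥ (-(L *ᵥ x t) - what t + w) := by
        rw [dotProduct_mulVec, ← mulVec_transpose, hL.eq]
      refine HasDerivAt.congr_deriv h3 ?_
      rw [Finset.sum_add_distrib]
      change (-(L *ᵥ x t) - what t + w) ⬝ᵥ L *ᵥ x t + x t ⬝ᵥ L *ᵥ (-(L *ᵥ x t) - what t + w) = _
      rw [h4, dotProduct_comm (-(L *ᵥ x t) - what t + w)]
      ring
    · intro t
      rw [hquad]
      have := Finset.sum_nonneg fun i (_ : i ∈ Finset.univ) =>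
        Finset.sum_nonneg fun j (_ : j ∈ Finset.univ) => hterm (x t) i j
      positivity
    · intro t _
      have h1 : C⁻¹ * (x t ⬝ᵥ L *ᵥ x t) ≤ L *ᵥ x t ⬝ᵥ L *ᵥ x t := by
        rw [inv_mul_le_iff₀ hC]
        exact hCL _
      have h2 : 2 * (L *ᵥ x t ⬝ᵥ (-(L *ᵥ x t) - what t + w))
          ≤ -(L *ᵥ x t ⬝ᵥ L *ᵥ x t) + ∑ i, (what t i - w i) ^ 2 := by
        generalize L *ᵥ x t = y
        simp only [dotProduct, Finset.mul_sum, ← Finset.sum_neg_distrib,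
          ← Finset.sum_add_distrib, Pi.add_apply, Pi.sub_apply, Pi.neg_apply]
        refine Finset.sum_le_sum fun i _ => ?_
        nlinarith [sq_nonneg (y i + (what t i - w i))]
      linarith
    · simpa using tendsto_finsetSum Finset.univ fun i _ => (hω i).pow 2
  have hadj : ∀ i j, G.Adj i j → Tendsto (fun t => x t i - x t j) atTop (nhds 0) := by
    intro i j hij
    have hsq : Tendsto (fun t => (x t i - x t j) ^ 2) atTop (nhds 0) := by
      refine squeeze_zero (fun t => sq_nonneg _) (fun t => ?_) (by simpa using hV.const_mul 2)
      rw [hquad]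
      have h1 := Finset.single_le_sum
        (f := fun i => ∑ j, if G.Adj i j then (x t i - x t j) ^ 2 else 0)
        (fun i _ => Finset.sum_nonneg fun j _ => hterm (x t) i j) (Finset.mem_univ i)
      have h2 := Finset.single_le_sum
        (f := fun j => if G.Adj i j then (x t i - x t j) ^ 2 else 0)
        (fun j _ => hterm (x t) i j) (Finset.mem_univ j)
      simp only [hij, if_true] at h1 h2
      linarith
    rw [tendsto_zero_iff_abs_tendsto_zero]
    simpa [Real.sqrt_sq_eq_abs, Function.comp_def] using hsq.sqrt
  intro i j
  obtain ⟨p⟩ := hG.preconnected i j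
  induction p with
  | nil => simp
  | cons h _ ih => simpa using (hadj _ _ h).add ih
end
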